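/- arXiv:1206.5159 — 3 statements merged into one kernel-verified Lean document; each statement's English description precedes it below -/
import Mathlib

section
/- For every integer k ≥ 0, there exists a simple graph that has a representation as an intersection graph of straight line segments in the plane using at most 3 distinct slopes (i.e., a 3-DIR graph), but has no B_k-VPG representation. Consequently, there is no k for which SEG ⊆ B_k-VPG. -/
/-!
Take the columns, rows and antidiagonals of a large triangular grid, drawn as long segments, and in
each cell a short segment meeting the three lines through it. The result is a 3-DIR graph.

Suppose that it is represented by axis-parallel curves with at most `n` straight pieces each. Colour
a cell by the pieces of the curves of its three lines that its own curve meets, by the directions of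
these pieces, and by which of them intersect. By Gallai's theorem there is a monochromatic
homothetic copy of a small triangular grid, and in that copy every line may be replaced by a single
horizontal or vertical segment, whose direction depends only on the family of the line. Two of the
three families then have the same direction, and either all lines `A i` of the first meet all lines
`B j` of the second, or none does. In the first case `A 0`, `B 0`, `A 1`, `B 1` are collinear
intervals whose intersection graph is a four-cycle, which is impossible. In the second case the
`A i`, the `B j` and the cells where they should cross form a planar drawing of `K₃,₃`.

That `K₃,₃` has no rectilinear drawing follows by counting, modulo 2, the horizontal edges of a path
that pass above or below the ends of another path. Points with the same abscissa are ordered by the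
other coordinate, that is, the ends are compared lexicographically.
-/

open Set Metric

/-- A point of the plane. -/
abbrev Pt : Type := ℝ × ℝ

/-- The trace (image) of a curve parametrized over `[0,1]`. -/
def Im (γ : ℝ → Pt) : Set Pt := γ '' Icc 0 1

/-- `γ` is affine on the interval `[s,t]`. -/
def AffOn (γ : ℝ → Pt) (s t : ℝ) : Prop :=
  ∃ a d : Pt, ∀ x ∈ Icc s t, γ x = (a.1 + x * d.1, a.2 + x * d.2)

/-- `γ` is affine on `[s,t]` with a horizontal or vertical direction. -/
def AxisAffOn (γ : ℝ → Pt) (s t : ℝ) : Prop :=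
  ∃ a d : Pt, (d.1 = 0 ∨ d.2 = 0) ∧ ∀ x ∈ Icc s t, γ x = (a.1 + x * d.1, a.2 + x * d.2)

/-- `γ` restricted to `[0,1]` is a simple piecewise linear curve consisting of at most
`n` straight segments. -/
def IsPLCurveN (n : ℕ) (γ : ℝ → Pt) : Prop :=
  InjOn γ (Icc 0 1) ∧
    ∃ t : Fin (n + 1) → ℝ, t 0 = 0 ∧ t (Fin.last n) = 1 ∧ Monotone t ∧
      ∀ i : Fin n, AffOn γ (t i.castSucc) (t i.succ)

/-- `γ` is a simple piecewise linear curve (finitely many segments). -/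
def IsPLCurve (γ : ℝ → Pt) : Prop := ∃ n, IsPLCurveN n γ

/-- `γ` restricted to `[0,1]` is a simple rectilinear (axis-parallel) curve consisting of
at most `n` horizontal or vertical straight segments. -/
def IsRectCurveN (n : ℕ) (γ : ℝ → Pt) : Prop :=
  InjOn γ (Icc 0 1) ∧
    ∃ t : Fin (n + 1) → ℝ, t 0 = 0 ∧ t (Fin.last n) = 1 ∧ Monotone t ∧
      ∀ i : Fin n, AxisAffOn γ (t i.castSucc) (t i.succ)

/-- `γ` is a simple rectilinear (axis-parallel) piecewise linear curve. -/
def IsRectCurve (γ : ℝ → Pt) : Prop := ∃ n, IsRectCurveN n γ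

/-- A `k`-bend axis-parallel curve: a simple curve that is a concatenation of at most
`k+1` horizontal or vertical straight segments (hence has at most `k` bends). -/
def IsKBendCurve (k : ℕ) (γ : ℝ → Pt) : Prop := IsRectCurveN (k + 1) γ

/-- `R` is an intersection representation of `G` by curves:
two distinct vertices are adjacent iff their curves meet. -/
def Represents {V : Type*} (G : SimpleGraph V) (R : V → ℝ → Pt) : Prop :=
  ∀ u v : V, u ≠ v → ((Im (R u) ∩ Im (R v)).Nonempty ↔ G.Adj u v)

/-- The set of intersection points of a representation: points lying on (at least)
two distinct curves. -/
def InPts {V : Type*} (R : V → ℝ → Pt) : Set Pt :=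
  {p | ∃ u v : V, u ≠ v ∧ p ∈ Im (R u) ∧ p ∈ Im (R v)}

/-- The set `B` crosses (transversally, from one side to the other) the set `A` at `p`:
in every small ball around `p` there are points of `B` off `A` that cannot be joined by a
connected subset of the ball avoiding `A`. -/
def CrossesAt (A B : Set Pt) (p : Pt) : Prop :=
  ∃ ε₀ > (0:ℝ), ∀ ε : ℝ, 0 < ε → ε ≤ ε₀ →
    ∃ x y : Pt, x ∈ (B ∩ ball p ε) \ A ∧ y ∈ (B ∩ ball p ε) \ A ∧
      ∀ C : Set Pt, C ⊆ ball p ε \ A → IsConnected C → ¬(x ∈ C ∧ y ∈ C)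

/-- A proper representation: finitely many intersection points (in particular no two
curves overlap), every intersection point lies on exactly two curves which cross
(do not touch) there, and no endpoint of a curve lies on another curve. -/
def IsProperRep {V : Type*} (R : V → ℝ → Pt) : Prop :=
  (InPts R).Finite ∧
    (∀ p : Pt, ∀ u v w : V, u ≠ v → u ≠ w → v ≠ w →
      ¬(p ∈ Im (R u) ∧ p ∈ Im (R v) ∧ p ∈ Im (R w))) ∧
    (∀ u v : V, u ≠ v → R u 0 ∉ Im (R v) ∧ R u 1 ∉ Im (R v)) ∧
    (∀ u v : V, u ≠ v → ∀ p ∈ Im (R u) ∩ Im (R v),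
      CrossesAt (Im (R u)) (Im (R v)) p ∧ CrossesAt (Im (R v)) (Im (R u)) p)

/-- Membership in the class `B_k`-VPG. -/
def InBkVPG (k : ℕ) {V : Type*} (G : SimpleGraph V) : Prop :=
  ∃ R : V → ℝ → Pt, (∀ v, IsKBendCurve k (R v)) ∧ Represents G R

/-- Membership in the class SEG of intersection graphs of straight line segments. -/
def InSEG {V : Type*} (G : SimpleGraph V) : Prop :=
  ∃ S : V → Pt × Pt, (∀ v, (S v).1 ≠ (S v).2) ∧
    ∀ u v : V, u ≠ v →
      ((segment ℝ (S u).1 (S u).2 ∩ segment ℝ (S v).1 (S v).2).Nonempty ↔ G.Adj u v)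

/-- Membership in the class 3-DIR: intersection graphs of straight line segments using
at most three distinct directions (slopes). -/
def In3DIR {V : Type*} (G : SimpleGraph V) : Prop :=
  ∃ D : Fin 3 → Pt, ∃ S : V → Pt × Pt,
    (∀ v, (S v).1 ≠ (S v).2) ∧
    (∀ v, ∃ i : Fin 3, ∃ c : ℝ, (S v).2 - (S v).1 = c • D i) ∧
    ∀ u v : V, u ≠ v →
      ((segment ℝ (S u).1 (S u).2 ∩ segment ℝ (S v).1 (S v).2).Nonempty ↔ G.Adj u v)

/-- `L` is a (straight) line in the plane. -/
def IsLine (L : Set Pt) : Prop :=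
  ∃ p d : Pt, d ≠ 0 ∧ L = {x : Pt | ∃ r : ℝ, x = (p.1 + r * d.1, p.2 + r * d.2)}

/-- `z` is a bend point of the set `S` (trace of a curve): `S` is not locally straight
at `z`, i.e. no neighbourhood of `z` in `S` is contained in a line. -/
def IsBendPt (S : Set Pt) (z : Pt) : Prop :=
  z ∈ S ∧ ∀ ε > (0:ℝ), ¬ ∃ L : Set Pt, IsLine L ∧ S ∩ ball z ε ⊆ L

section Parity

variable {X Y : Type*} [LinearOrder X] [LinearOrder Y]

/-- The graph on the points of `X × Y` in which two points are adjacent if they are the ends of a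
horizontal or vertical segment contained in `S`; its walks are the rectilinear paths in `S`. -/
def stepGraph (S : Set (X × Y)) : SimpleGraph (X × Y) where
  Adj p q := p ≠ q ∧ (p.1 = q.1 ∨ p.2 = q.2) ∧ uIcc p q ⊆ S
  symm := ⟨fun _ _ h => ⟨h.1.symm, h.2.1.imp Eq.symm Eq.symm, uIcc_comm (α := X × Y) _ _ ▸ h.2.2⟩⟩
  loopless := ⟨fun _ h => h.1 rfl⟩

/-- The truth value of `a < b` modulo 2. -/
def ltInd {L : Type*} [LinearOrder L] (a b : L) : ZMod 2 := if a < b then 1 else 0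

theorem mem_uIcc_of_ltInd_left_ne {L : Type*} [LinearOrder L] {a b c : L}
    (h : ltInd a c ≠ ltInd b c) : c ∈ uIcc a b := by
  rw [mem_uIcc]
  unfold ltInd at h
  grind

theorem mem_uIcc_of_ltInd_right_ne {L : Type*} [LinearOrder L] {a b c : L}
    (h : ltInd c a ≠ ltInd c b) : c ∈ uIcc a b := by
  rw [mem_uIcc]
  unfold ltInd at h
  grind

theorem ltInd_add_ltInd_swap {L : Type*} [LinearOrder L] {a b : L} (h : a ≠ b) :
    ltInd a b + ltInd b a = 1 := by
  rcases h.lt_or_gt with h | h <;> simp [ltInd, h, h.not_gt]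

/-- Whether the horizontal edge `p q` passes above `P`, modulo 2; it is `0` for vertical edges. -/
def edgeAbove (p q P : X × Y) : ZMod 2 := (ltInd p.1 P.1 + ltInd q.1 P.1) * ltInd P.2 p.2

/-- Whether the horizontal edge `p q` passes below `P`, modulo 2; it is `0` for vertical edges. -/
def edgeBelow (p q P : X × Y) : ZMod 2 := (ltInd P.1 p.1 + ltInd P.1 q.1) * ltInd p.2 P.2

/-- The number of horizontal edges of the walk passing above `P`, modulo 2. -/
def walkAbove {S : Set (X × Y)} (P : X × Y) : ∀ {p q : X × Y}, (stepGraph S).Walk p q → ZMod 2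
  | _, _, .nil => 0
  | p, _, .cons (v := p') _ w => edgeAbove p p' P + walkAbove P w

/-- The number of horizontal edges of the walk passing below `P`, modulo 2. -/
def walkBelow {S : Set (X × Y)} (P : X × Y) : ∀ {p q : X × Y}, (stepGraph S).Walk p q → ZMod 2
  | _, _, .nil => 0
  | p, _, .cons (v := p') _ w => edgeBelow p p' P + walkBelow P w

theorem edgeAbove_add_edgeBelow_of_disjoint {S T : Set (X × Y)} (hST : Disjoint S T)
    {p p' q q' : X × Y} (hp : (stepGraph S).Adj p p') (hq : (stepGraph T).Adj q q') :
    edgeAbove p p' q + edgeAbove p p' q' + (edgeBelow q q' p + edgeBelow q q' p') = 0 := by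
  obtain ⟨-, hp, hpS⟩ := hp
  obtain ⟨-, hq, hqT⟩ := hq
  have no_common {z : X × Y} (hzp : z ∈ uIcc p p') (hzq : z ∈ uIcc q q') : False :=
    disjoint_left.1 hST (hpS hzp) (hqT hzq)
  simp only [uIcc_prod_eq, mem_prod] at no_common
  unfold edgeAbove edgeBelow
  rcases hp with hp | hp <;> rcases hq with hq | hq
  · grind
  · have : (ltInd p.1 q.1 + ltInd p.1 q'.1) * (ltInd q.2 p.2 + ltInd q.2 p'.2) = 0 := by
      by_contra hne
      refine no_common (z := (p.1, q.2)) ⟨left_mem_uIcc, mem_uIcc_of_ltInd_right_ne ?_⟩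
        ⟨mem_uIcc_of_ltInd_right_ne ?_, left_mem_uIcc⟩
      all_goals
        intro heq
        simp [heq, CharTwo.add_self_eq_zero] at hne
    grind
  · have : (ltInd p.1 q.1 + ltInd p'.1 q.1) * (ltInd q.2 p.2 + ltInd q'.2 p.2) = 0 := by
      by_contra hne
      refine no_common (z := (q.1, p.2)) ⟨mem_uIcc_of_ltInd_left_ne ?_, left_mem_uIcc⟩
        ⟨left_mem_uIcc, mem_uIcc_of_ltInd_left_ne ?_⟩
      all_goals
        intro heq
        simp [heq, CharTwo.add_self_eq_zero] at hne
    grind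
  · grind

theorem edgeAbove_add_walkBelow_of_disjoint {S T : Set (X × Y)} (hST : Disjoint S T)
    {p p' q q' : X × Y} (hp : (stepGraph S).Adj p p') (W : (stepGraph T).Walk q q') :
    edgeAbove p p' q + edgeAbove p p' q' + (walkBelow p W + walkBelow p' W) = 0 := by
  induction W with
  | nil => simp [walkBelow, CharTwo.add_self_eq_zero]
  | cons hq W ih =>
    have := edgeAbove_add_edgeBelow_of_disjoint hST hp hq
    simp only [walkBelow]
    grind

theorem walkAbove_add_walkBelow_of_disjoint {S T : Set (X × Y)} (hST : Disjoint S T)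
    {p p' q q' : X × Y} (w : (stepGraph S).Walk p p') (W : (stepGraph T).Walk q q') :
    walkAbove q w + walkAbove q' w + (walkBelow p W + walkBelow p' W) = 0 := by
  induction w with
  | nil => simp [walkAbove, CharTwo.add_self_eq_zero]
  | cons hp w ih =>
    have := edgeAbove_add_walkBelow_of_disjoint hST hp W
    simp only [walkAbove]
    grind

theorem ltInd_toLex (p q : X × Y) :
    ltInd (toLex p) (toLex q) = ltInd p.1 q.1 + if p.1 = q.1 then ltInd p.2 q.2 else 0 := by
  simp only [ltInd, Prod.Lex.toLex_lt_toLex]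
  grind

theorem edgeAbove_add_edgeBelow_of_notMem {S : Set (X × Y)} {p p' P : X × Y}
    (hp : (stepGraph S).Adj p p') (hP : P ∉ S) :
    edgeAbove p p' P + edgeBelow p p' P =
      ltInd (toLex p) (toLex P) + ltInd (toLex p') (toLex P) := by
  obtain ⟨-, hpp', hpS⟩ := hp
  have hP' : ¬ (P.1 ∈ uIcc p.1 p'.1 ∧ P.2 ∈ uIcc p.2 p'.2) := fun h =>
    hP (hpS (by rwa [uIcc_prod_eq, mem_prod]))
  simp only [edgeAbove, edgeBelow, ltInd_toLex]
  rcases hpp' with heq | heq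
  · have : p.1 = P.1 → ltInd p.2 P.2 = ltInd p'.2 P.2 := fun h => by
      by_contra hne
      exact hP' ⟨h ▸ left_mem_uIcc, mem_uIcc_of_ltInd_left_ne hne⟩
    grind
  · have flip (r : X × Y) : ltInd P.1 r.1 = 1 + ltInd r.1 P.1 + if r.1 = P.1 then 1 else 0 := by
      unfold ltInd
      grind
    rcases lt_trichotomy P.2 p.2 with h | h | h
    · have above_one : ltInd P.2 p.2 = 1 := if_pos h
      have below_zero : ltInd p.2 P.2 = 0 := if_neg h.not_gt
      grind
    · have : ltInd p.1 P.1 = ltInd p'.1 P.1 := by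
        by_contra hne
        exact hP' ⟨mem_uIcc_of_ltInd_left_ne hne, h ▸ left_mem_uIcc⟩
      have above_zero : ltInd P.2 p.2 = 0 := if_neg h.not_lt
      have below_zero : ltInd p.2 P.2 = 0 := if_neg h.not_gt
      grind
    · have above_zero : ltInd P.2 p.2 = 0 := if_neg h.not_gt
      have below_one : ltInd p.2 P.2 = 1 := if_pos h
      grind

theorem walkAbove_add_walkBelow_of_notMem {S : Set (X × Y)} {p q P : X × Y}
    (w : (stepGraph S).Walk p q) (hP : P ∉ S) :
    walkAbove P w + walkBelow P w = ltInd (toLex p) (toLex P) + ltInd (toLex q) (toLex P) := by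
  induction w with
  | nil => simp [walkAbove, walkBelow, CharTwo.add_self_eq_zero]
  | cons hp w ih =>
    have := edgeAbove_add_edgeBelow_of_notMem hp hP
    simp only [walkAbove, walkBelow]
    grind

theorem sum_offDiag_fin_three {M : Type*} [AddCommMonoid M] (f : Fin 3 × Fin 3 → M) :
    ∑ x ∈ Finset.univ.offDiag, f x =
      f (0, 1) + f (0, 2) + f (1, 0) + f (1, 2) + f (2, 0) + f (2, 1) := by
  rw [show (Finset.univ : Finset (Fin 3)).offDiag =
    {(0, 1), (0, 2), (1, 0), (1, 2), (2, 0), (2, 1)} by decide]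
  simp [add_assoc]

/-- For `i ≠ k`, add up `walkAbove_add_walkBelow_of_disjoint` for the walks `w i j` and `w k l` over
all `j ≠ l`: the terms at `a i` and `a k` occur twice, so `A i + B k = 0`. Hence `A 1 + B 1 = 0`,
whereas `A 1 + B 1` counts the three pairs of points `b j`. -/
theorem not_exists_walks_K33 (E : Fin 3 → Fin 3 → Set (X × Y)) (a b : Fin 3 → X × Y)
    (hb : Function.Injective b) (w : ∀ i j, (stepGraph (E i j)).Walk (a i) (b j))
    (hE : ∀ i j k l, i ≠ k → j ≠ l → Disjoint (E i j) (E k l))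
    (hbE : ∀ i j l, j ≠ l → b l ∉ E i j) : False := by
  let A (i : Fin 3) : ZMod 2 := ∑ x ∈ Finset.univ.offDiag, walkAbove (b x.2) (w i x.1)
  let B (i : Fin 3) : ZMod 2 := ∑ x ∈ Finset.univ.offDiag, walkBelow (b x.2) (w i x.1)
  have hAB (i k : Fin 3) (hik : i ≠ k) : A i + B k = 0 := by
    have := Finset.sum_eq_zero fun x (hx : x ∈ (Finset.univ : Finset (Fin 3)).offDiag) =>
      have hx := (Finset.mem_offDiag.1 hx).2.2
      walkAbove_add_walkBelow_of_disjoint (hE i x.1 k x.2 hik hx) (w i x.1) (w k x.2)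
    simp only [A, B, sum_offDiag_fin_three] at this ⊢
    grind
  have hAB_self : A 1 + B 1 = 1 := by
    have crossings := Finset.sum_congr (M := ZMod 2) rfl fun x
        (hx : x ∈ (Finset.univ : Finset (Fin 3)).offDiag) =>
      walkAbove_add_walkBelow_of_notMem (w 1 x.1) (hbE 1 x.1 x.2 (Finset.mem_offDiag.1 hx).2.2)
    have swap (j l : Fin 3) (h : j ≠ l) := ltInd_add_ltInd_swap (toLex.injective.ne (hb.ne h))
    have h01 := swap 0 1 (by decide)
    have h02 := swap 0 2 (by decide)
    have h12 := swap 1 2 (by decide)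
    simp only [A, B, sum_offDiag_fin_three] at crossings ⊢
    grind
  have h01 := hAB 0 1 (by decide)
  have h02 := hAB 0 2 (by decide)
  have h12 := hAB 1 2 (by decide)
  grind

end Parity

section RectConnected

variable {X Y : Type*} [LinearOrder X] [LinearOrder Y]

theorem stepGraph_mono {S T : Set (X × Y)} (h : S ⊆ T) : stepGraph S ≤ stepGraph T :=
  fun _ _ hpq => ⟨hpq.1, hpq.2.1, hpq.2.2.trans h⟩

/-- Any two points of `S` are joined by a rectilinear path in `S`. -/
def IsRectConnected (S : Set (X × Y)) : Prop :=
  ∀ p ∈ S, ∀ q ∈ S, (stepGraph S).Reachable p q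

theorem IsRectConnected.union {S T : Set (X × Y)} (hS : IsRectConnected S)
    (hT : IsRectConnected T) (hST : (S ∩ T).Nonempty) : IsRectConnected (S ∪ T) := by
  obtain ⟨z, hzS, hzT⟩ := hST
  have to_z : ∀ p ∈ S ∪ T, (stepGraph (S ∪ T)).Reachable p z := by
    rintro p (hp | hp)
    · exact (hS p hp z hzS).mono (stepGraph_mono subset_union_left)
    · exact (hT p hp z hzT).mono (stepGraph_mono subset_union_right)
  exact fun p hp q hq => (to_z p hp).trans (to_z q hq).symm

/-- A system of sets `T i j` linking each of the three sets `A i` to each of the three sets `B j`,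
with no intersections other than the required ones, except possibly between `A i` and `B j`. -/
structure IsLinkedGrid {α : Type*} (A B : Fin 3 → Set α) (T : Fin 3 → Fin 3 → Set α) : Prop where
  left_pairwise : Pairwise fun i k => Disjoint (A i) (A k)
  right_pairwise : Pairwise fun j l => Disjoint (B j) (B l)
  link_disjoint : ∀ i j k l, i ≠ k → j ≠ l → Disjoint (T i j) (T k l)
  link_left : ∀ i j k, Disjoint (T i j) (A k) ↔ i ≠ k
  link_right : ∀ i j l, Disjoint (T i j) (B l) ↔ j ≠ l

/-- If every `A i` missed every `B j`, the sets `A i ∪ T i j ∪ B j` would contain the edges of a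
planar drawing of `K₃,₃`. -/
theorem IsLinkedGrid.exists_not_disjoint {A B : Fin 3 → Set (X × Y)}
    {T : Fin 3 → Fin 3 → Set (X × Y)} (h : IsLinkedGrid A B T) (hA : ∀ i, IsRectConnected (A i))
    (hB : ∀ j, IsRectConnected (B j)) (hT : ∀ i j, IsRectConnected (T i j)) :
    ∃ i j, ¬ Disjoint (A i) (B j) := by
  by_contra! hAB
  have meets_left (i j : Fin 3) : (A i ∩ T i j).Nonempty := by
    rw [inter_comm, ← not_disjoint_iff_nonempty_inter, h.link_left]
    simp
  have meets_right (i j : Fin 3) : (T i j ∩ B j).Nonempty := by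
    rw [← not_disjoint_iff_nonempty_inter, h.link_right]
    simp
  choose a ha using fun i => (meets_left i 0).mono inter_subset_left
  choose b hb using fun j => (meets_right 0 j).mono inter_subset_right
  have edge_connected (i j : Fin 3) : IsRectConnected (A i ∪ T i j ∪ B j) :=
    ((hA i).union (hT i j) (meets_left i j)).union (hB j)
      ((meets_right i j).mono (inter_subset_inter_left _ subset_union_right))
  have edge_disjoint_right (i j l : Fin 3) (hjl : j ≠ l) :
      Disjoint (A i ∪ T i j ∪ B j) (B l) := by
    simp only [disjoint_union_left]
    exact ⟨⟨hAB i l, (h.link_right i j l).2 hjl⟩, h.right_pairwise hjl⟩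
  refine not_exists_walks_K33 (fun i j => A i ∪ T i j ∪ B j) a b ?_
    (fun i j => (edge_connected i j _ (.inl (.inl (ha i))) _ (.inr (hb j))).some) ?_
    (fun i j l hjl hbl => disjoint_left.1 (edge_disjoint_right i j l hjl) hbl (hb l))
  · intro j l hjl
    by_contra hne
    exact disjoint_left.1 (h.right_pairwise hne) (hb j) (hjl ▸ hb l)
  · intro i j k l hik hjl
    refine disjoint_union_right.2 ⟨disjoint_union_right.2 ⟨?_, ?_⟩, edge_disjoint_right i j l hjl⟩
    · simp only [disjoint_union_left]
      exact ⟨⟨h.left_pairwise hik, (h.link_left i j k).2 hik⟩, (hAB k j).symm⟩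
    · simp only [disjoint_union_left]
      exact ⟨⟨((h.link_left k l i).2 hik.symm).symm, h.link_disjoint i j k l hik hjl⟩,
        ((h.link_right k l j).2 hjl.symm).symm⟩

end RectConnected

section AxisSegment

theorem not_disjoint_of_ordConnected_of_C4 {L : Type*} [LinearOrder L] {A₁ A₂ B₁ B₂ : Set L}
    (hA₁ : A₁.OrdConnected) (hA₂ : A₂.OrdConnected) (hB₁ : B₁.OrdConnected)
    (hB₂ : B₂.OrdConnected) (h₁₁ : ¬ Disjoint A₁ B₁) (h₁₂ : ¬ Disjoint A₁ B₂)
    (h₂₁ : ¬ Disjoint A₂ B₁) (h₂₂ : ¬ Disjoint A₂ B₂) (hA : Disjoint A₁ A₂) :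
    ¬ Disjoint B₁ B₂ := by
  obtain ⟨x, hxA, hxB⟩ := not_disjoint_iff.1 h₁₁
  obtain ⟨y, hyA, hyB⟩ := not_disjoint_iff.1 h₁₂
  obtain ⟨z, hzA, hzB⟩ := not_disjoint_iff.1 h₂₁
  obtain ⟨w, hwA, hwB⟩ := not_disjoint_iff.1 h₂₂
  wlog hxz : x < z generalizing A₁ A₂ x y z w
  · have hzx : z ≠ x := fun h => disjoint_left.1 hA hxA (h ▸ hzA)
    exact this hA₂ hA₁ h₂₁ h₂₂ h₁₁ h₁₂ hA.symm z hzA hzB w hwA hwB x hxA hxB y hyA hyB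
      (lt_of_le_of_ne (not_lt.1 hxz) hzx)
  have lt_of_mem {a c : L} (ha : a ∈ A₁) (hc : c ∈ A₂) : a < c := by
    have haz : a < z := not_le.1 fun hza => disjoint_left.1 hA (hA₁.out hxA ha ⟨hxz.le, hza⟩) hzA
    exact not_le.1 fun hca => disjoint_left.1 hA ha (hA₂.out hc hzA ⟨hca, haz.le⟩)
  refine not_disjoint_iff.2 ⟨max x y, hB₁.out hxB hzB ?_, hB₂.out hyB hwB ?_⟩
  · exact ⟨le_max_left _ _, max_le hxz.le (lt_of_mem hyA hzA).le⟩
  · exact ⟨le_max_right _ _, max_le (lt_of_mem hxA hwA).le (lt_of_mem hyA hwA).le⟩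

/-- The point with coordinate `x` on the horizontal (if `o`) or vertical (if not `o`) line at
position `c`. -/
def axisLine {L : Type*} (o : Bool) (c x : L) : L × L := if o then (x, c) else (c, x)

/-- `P` is a horizontal (if `o`) or vertical (if not `o`) segment; it may be empty, unbounded, or
lack an end. -/
def IsAxisSegment {L : Type*} [Preorder L] (o : Bool) (P : Set (L × L)) : Prop :=
  ∃ (c : L) (I : Set L), I.OrdConnected ∧ P = axisLine o c '' I

theorem axisLine_inj {L : Type*} {o : Bool} {c c' x x' : L} :
    axisLine o c x = axisLine o c' x' ↔ c = c' ∧ x = x' := by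
  cases o <;> simp [axisLine, and_comm]

variable {L : Type*} [LinearOrder L] {o : Bool}

theorem uIcc_axisLine (c x y : L) :
    uIcc (axisLine o c x) (axisLine o c y) = axisLine o c '' uIcc x y := by
  cases o
  · simp only [axisLine, Bool.false_eq_true, if_false, uIcc_prod_eq, uIcc_self, singleton_prod]
    rfl
  · simp only [axisLine, if_true, uIcc_prod_eq, uIcc_self, prod_singleton]
    rfl

theorem IsAxisSegment.isRectConnected {P : Set (L × L)} (hP : IsAxisSegment o P) :
    IsRectConnected P := by
  obtain ⟨c, I, hI, rfl⟩ := hP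
  rintro _ ⟨x, hx, rfl⟩ _ ⟨y, hy, rfl⟩
  by_cases hxy : axisLine o c x = axisLine o c y
  · rw [hxy]
  · refine SimpleGraph.Adj.reachable ⟨hxy, ?_, ?_⟩
    · cases o <;> simp [axisLine]
    · rw [uIcc_axisLine]
      exact image_mono (hI.uIcc_subset hx hy)

theorem IsAxisSegment.not_disjoint_of_C4 {A₁ A₂ B₁ B₂ : Set (L × L)} (hA₁ : IsAxisSegment o A₁)
    (hA₂ : IsAxisSegment o A₂) (hB₁ : IsAxisSegment o B₁) (hB₂ : IsAxisSegment o B₂)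
    (h₁₁ : ¬ Disjoint A₁ B₁) (h₁₂ : ¬ Disjoint A₁ B₂) (h₂₁ : ¬ Disjoint A₂ B₁)
    (h₂₂ : ¬ Disjoint A₂ B₂) (hA : Disjoint A₁ A₂) : ¬ Disjoint B₁ B₂ := by
  obtain ⟨a₁, I₁, hI₁, rfl⟩ := hA₁
  obtain ⟨a₂, I₂, hI₂, rfl⟩ := hA₂
  obtain ⟨b₁, J₁, hJ₁, rfl⟩ := hB₁
  obtain ⟨b₂, J₂, hJ₂, rfl⟩ := hB₂
  have image_not_disjoint {a b : L} {I J : Set L} :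
      ¬ Disjoint (axisLine o a '' I) (axisLine o b '' J) ↔ a = b ∧ ¬ Disjoint I J := by
    simp only [not_disjoint_iff, mem_image]
    grind [axisLine_inj (L := L)]
  rw [image_not_disjoint] at h₁₁ h₁₂ h₂₁ h₂₂ ⊢
  obtain ⟨rfl, h₁₁⟩ := h₁₁
  obtain ⟨rfl, h₁₂⟩ := h₁₂
  obtain ⟨rfl, h₂₁⟩ := h₂₁
  refine ⟨rfl, not_disjoint_of_ordConnected_of_C4 hI₁ hI₂ hJ₁ hJ₂ h₁₁ h₁₂ h₂₁ h₂₂.2 ?_⟩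
  exact not_not.1 fun h => image_not_disjoint.2 ⟨rfl, h⟩ hA

theorem IsLinkedGrid.false_of_isAxisSegment {A B : Fin 3 → Set (L × L)}
    {T : Fin 3 → Fin 3 → Set (L × L)} (h : IsLinkedGrid A B T) (hA : ∀ i, IsAxisSegment o (A i))
    (hB : ∀ j, IsAxisSegment o (B j)) (hT : ∀ i j, IsRectConnected (T i j))
    (hAB : ∀ i j k l, Disjoint (A i) (B j) → Disjoint (A k) (B l)) : False := by
  obtain ⟨i, j, hij⟩ := h.exists_not_disjoint (fun i => (hA i).isRectConnected)
    (fun j => (hB j).isRectConnected) hT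
  have not_disjoint (k l : Fin 3) : ¬ Disjoint (A k) (B l) := mt (hAB k l i j) hij
  exact IsAxisSegment.not_disjoint_of_C4 (hA 0) (hA 1) (hB 0) (hB 1) (not_disjoint 0 0)
    (not_disjoint 0 1) (not_disjoint 1 0) (not_disjoint 1 1) (h.left_pairwise (by decide))
    (h.right_pairwise (by decide))

end AxisSegment

section Rectilinear

theorem AxisAffOn.exists_image_isAxisSegment {γ : ℝ → Pt} {s t : ℝ} (h : AxisAffOn γ s t) :
    ∃ o, IsAxisSegment o (γ '' Icc s t) := by
  obtain ⟨a, d, hd, hγ⟩ := h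
  have ordConnected (a d : ℝ) : ((fun x => a + x * d) '' Icc s t).OrdConnected :=
    (isPreconnected_Icc.image _ (by fun_prop)).ordConnected
  rcases hd with hd | hd
  · refine ⟨false, a.1, _, ordConnected a.2 d.2, ?_⟩
    rw [image_image]
    exact image_congr fun x hx => by simp [hγ x hx, hd, axisLine]
  · refine ⟨true, a.2, _, ordConnected a.1 d.1, ?_⟩
    rw [image_image]
    exact image_congr fun x hx => by simp [hγ x hx, hd, axisLine]

/-- `S` is rectilinearly connected and a union of `n` axis-parallel segments. This generalizes the
axis-parallel curves with at most `n` straight pieces. -/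
def IsRectilinear (n : ℕ) (S : Set Pt) : Prop :=
  IsRectConnected S ∧ ∃ (o : Fin n → Bool) (P : Fin n → Set Pt),
    (∀ s, IsAxisSegment (o s) (P s)) ∧ ⋃ s, P s = S

theorem isRectilinear_empty (n : ℕ) : IsRectilinear n ∅ :=
  ⟨fun _ h => h.elim, fun _ => true, fun _ => ∅, fun _ => ⟨0, ∅, ordConnected_empty, by simp⟩,
    by simp⟩

theorem iUnion_Icc_castSucc_succ {α : Type*} [LinearOrder α] {n : ℕ} {t : Fin (n + 2) → α}
    (ht : Monotone t) :
    ⋃ i : Fin (n + 1), Icc (t i.castSucc) (t i.succ) = Icc (t 0) (t (Fin.last _)) := by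
  have covered (m : Fin (n + 2)) :
      Icc (t 0) (t m) ⊆ ⋃ i : Fin (n + 1), Icc (t i.castSucc) (t i.succ) := by
    induction m using Fin.induction with
    | zero =>
      rw [Icc_self, singleton_subset_iff, mem_iUnion]
      exact ⟨0, le_rfl, ht (Fin.zero_le _)⟩
    | succ m ih =>
      rw [← Icc_union_Icc_eq_Icc (ht (Fin.zero_le m.castSucc)) (ht m.castSucc_lt_succ.le)]
      exact union_subset ih (subset_iUnion_of_subset m subset_rfl)
  exact (iUnion_subset fun i => Icc_subset_Icc (ht (Fin.zero_le _)) (ht (Fin.le_last _))).antisymm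
    (covered _)

theorem IsKBendCurve.isRectilinear {k : ℕ} {γ : ℝ → Pt} (h : IsKBendCurve k γ) :
    IsRectilinear (k + 1) (Im γ) := by
  obtain ⟨-, t, h0, h1, ht, haff⟩ := h
  choose o ho using fun i => (haff i).exists_image_isAxisSegment
  have connected (m : Fin (k + 2)) : IsRectConnected (γ '' Icc (t 0) (t m)) := by
    induction m using Fin.induction with
    | zero =>
      rw [Icc_self, image_singleton]
      rintro _ rfl _ rfl
      rfl
    | succ m ih =>
      have h0m : t 0 ≤ t m.castSucc := ht (Fin.zero_le _)
      have hm : t m.castSucc ≤ t m.succ := ht m.castSucc_lt_succ.le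
      rw [← Icc_union_Icc_eq_Icc h0m hm, image_union]
      exact ih.union (ho m).isRectConnected ⟨γ (t m.castSucc),
        mem_image_of_mem γ (right_mem_Icc.2 h0m), mem_image_of_mem γ (left_mem_Icc.2 hm)⟩
  rw [Im, ← h0, ← h1]
  refine ⟨connected _, o, _, ho, ?_⟩
  rw [← image_iUnion, iUnion_Icc_castSucc_succ ht]

end Rectilinear

section Gallai
open Filter

/-- The compactness argument: an ultrafilter limit of bad colourings, one for each `T`, would
contradict Gallai's theorem `Combinatorics.exists_mono_homothetic_copy`. -/
theorem exists_finset_mono_homothetic_copy {M κ : Type*} [AddCommMonoid M] [Finite κ]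
    (S : Finset M) : ∃ T : Finset M, ∀ C : M → κ, ∃ a > 0, ∃ (b : M) (c : κ), ∀ s ∈ S,
      a • s + b ∈ T ∧ C (a • s + b) = c := by
  by_contra! hT
  choose C hC using hT
  let U : Ultrafilter (Finset M) := Ultrafilter.of atTop
  have limit (m : M) : ∃ c, ∀ᶠ T in (U : Filter (Finset M)), C T m = c :=
    Ultrafilter.eventually_exists_iff.1 (.of_forall fun T => ⟨_, rfl⟩)
  choose D hD using limit
  obtain ⟨a, ha, b, c, hc⟩ := Combinatorics.exists_mono_homothetic_copy S D
  have agree : ∀ᶠ T in (U : Filter (Finset M)), ∀ s ∈ S, a • s + b ∈ T ∧ C T (a • s + b) = c := by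
    refine (Filter.eventually_all_finset S).2 fun s hs => ?_
    have mem : ∀ᶠ T in (U : Filter (Finset M)), a • s + b ∈ T :=
      ((eventually_ge_atTop {a • s + b}).mono fun _ => Finset.singleton_subset_iff.1).filter_mono
        (Ultrafilter.of_le atTop)
    filter_upwards [mem, hD (a • s + b)] with T hT hCT
    exact ⟨hT, hCT.trans (hc s hs)⟩
  obtain ⟨T, hT⟩ := agree.exists
  obtain ⟨s, hs, hne⟩ := hC T a ha b c
  exact hne (hT s hs).1 (hT s hs).2

end Gallai

section TriangularGrid

/-- The number of the column, of the row, and of the antidiagonal containing a cell of the grid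
`ℕ × ℕ`. -/
def lineIndex : Fin 3 → (ℕ × ℕ →+ ℕ) :=
  ![.fst ℕ ℕ, .snd ℕ ℕ, .fst ℕ ℕ + .snd ℕ ℕ]

/-- The intersection pattern of a triangular grid with set of cells `T`: the lines `L c m` of the
same family `c` are pairwise disjoint, the sets `t p` are pairwise disjoint, and `t p` meets only
those lines that pass through the cell `p`. Intersections of lines of different families are not
prescribed. -/
structure RealizesGrid {α : Type*} (T : Finset (ℕ × ℕ)) (L : Fin 3 → ℕ → Set α)
    (t : ℕ × ℕ → Set α) : Prop where
  line_disjoint : ∀ c, ∀ p ∈ T, ∀ q ∈ T, lineIndex c p ≠ lineIndex c q →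
    Disjoint (L c (lineIndex c p)) (L c (lineIndex c q))
  cell_disjoint : ∀ p ∈ T, ∀ q ∈ T, p ≠ q → Disjoint (t p) (t q)
  cell_line : ∀ c, ∀ p ∈ T, ∀ q ∈ T,
    Disjoint (t p) (L c (lineIndex c q)) ↔ lineIndex c p ≠ lineIndex c q

theorem lineIndex_smul_add (c : Fin 3) (a : ℕ) (b p : ℕ × ℕ) :
    lineIndex c (a • p + b) = a * lineIndex c p + lineIndex c b := by
  rw [map_add, map_nsmul, smul_eq_mul]

theorem RealizesGrid.homothetic {α : Type*} {S T : Finset (ℕ × ℕ)} {L : Fin 3 → ℕ → Set α}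
    {t : ℕ × ℕ → Set α} (h : RealizesGrid T L t) {a : ℕ} (ha : 0 < a) {b : ℕ × ℕ}
    (hST : ∀ p ∈ S, a • p + b ∈ T) :
    RealizesGrid S (fun c m => L c (a * m + lineIndex c b)) (fun p => t (a • p + b)) := by
  have index_ne {c : Fin 3} {p q : ℕ × ℕ} :
      lineIndex c (a • p + b) ≠ lineIndex c (a • q + b) ↔ lineIndex c p ≠ lineIndex c q := by
    rw [lineIndex_smul_add, lineIndex_smul_add, Ne, Nat.add_right_cancel_iff,
      Nat.mul_right_inj ha.ne']
  refine ⟨fun c p hp q hq hpq => ?_, fun p hp q hq hpq => ?_, fun c p hp q hq => ?_⟩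
  · simp only [← lineIndex_smul_add]
    exact h.line_disjoint c _ (hST p hp) _ (hST q hq) (index_ne.2 hpq)
  · exact h.cell_disjoint _ (hST p hp) _ (hST q hq) fun heq =>
      hpq (smul_right_injective _ ha.ne' (add_right_cancel heq))
  · simp only [← lineIndex_smul_add]
    exact (h.cell_line c _ (hST p hp) _ (hST q hq)).trans index_ne

theorem RealizesGrid.mono {α : Type*} {T : Finset (ℕ × ℕ)} {L L' : Fin 3 → ℕ → Set α}
    {t : ℕ × ℕ → Set α} (h : RealizesGrid T L t) (hL : ∀ c m, L' c m ⊆ L c m)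
    (ht : ∀ c, ∀ p ∈ T, ¬ Disjoint (t p) (L' c (lineIndex c p))) : RealizesGrid T L' t where
  line_disjoint c p hp q hq hpq := (h.line_disjoint c p hp q hq hpq).mono (hL _ _) (hL _ _)
  cell_disjoint := h.cell_disjoint
  cell_line c p hp q hq :=
    ⟨fun hd heq => ht c p hp (heq ▸ hd),
      fun hne => ((h.cell_line c p hp q hq).2 hne).mono_right (hL _ _)⟩

/-- The square of cells `p` with both coordinates less than `6`. -/
abbrev square : Finset (ℕ × ℕ) := Finset.range 6 ×ˢ Finset.range 6

-- The antidiagonals are counted from `3` on, so that they meet the first three rows and columns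
-- within the square.
theorem exists_cell {c c' : Fin 3} (hc : c ≠ c') (x y : Fin 3) :
    ∃ p ∈ square, lineIndex c p = x + ![0, 0, 3] c ∧ lineIndex c' p = y + ![0, 0, 3] c' := by
  revert c c' x y
  decide

theorem RealizesGrid.false_of_homogeneous {X : Type*} [LinearOrder X]
    {L : Fin 3 → ℕ → Set (X × X)} {t : ℕ × ℕ → Set (X × X)}
    (h : RealizesGrid square L t) (o : Fin 3 → Bool)
    (hL : ∀ c, ∀ p ∈ square, IsAxisSegment (o c) (L c (lineIndex c p)))
    (ht : ∀ p ∈ square, IsRectConnected (t p))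
    (hLL : ∀ c c', ∀ p ∈ square, ∀ q ∈ square,
      Disjoint (L c (lineIndex c p)) (L c' (lineIndex c' p)) →
        Disjoint (L c (lineIndex c q)) (L c' (lineIndex c' q))) : False := by
  obtain ⟨c, c', hcc', ho⟩ := Fintype.exists_ne_map_eq_of_card_lt o (by simp)
  choose p hp hpc hpc' using exists_cell hcc'
  have index_ne {d : Fin 3} {x y : Fin 3} (hxy : x ≠ y) :
      (x : ℕ) + ![0, 0, 3] d ≠ y + ![0, 0, 3] d := by simpa [Fin.val_inj] using hxy
  have grid : IsLinkedGrid (fun x => L c (lineIndex c (p x 0)))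
      (fun y => L c' (lineIndex c' (p 0 y))) (fun x y => t (p x y)) := by
    refine ⟨fun x y hxy => ?_, fun x y hxy => ?_, fun x y z w hxz _ => ?_, fun x y z => ?_,
      fun x y w => ?_⟩
    · exact h.line_disjoint c _ (hp _ _) _ (hp _ _) (by simpa only [hpc] using index_ne hxy)
    · exact h.line_disjoint c' _ (hp _ _) _ (hp _ _) (by simpa only [hpc'] using index_ne hxy)
    · refine h.cell_disjoint _ (hp _ _) _ (hp _ _) fun heq => index_ne (d := c) hxz ?_
      rw [← hpc x y, heq, hpc]
    · exact (h.cell_line c _ (hp _ _) _ (hp _ _)).trans (by simp [hpc, Fin.val_inj])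
    · exact (h.cell_line c' _ (hp _ _) _ (hp _ _)).trans (by simp [hpc', Fin.val_inj])
  refine grid.false_of_isAxisSegment (o := o c) (fun x => hL c _ (hp _ _))
    (fun y => ho ▸ hL c' _ (hp _ _)) (fun x y => ht _ (hp x y)) fun x y z w hxy => ?_
  rw [hpc, ← hpc z w, hpc', ← hpc' z w]
  refine hLL c c' _ (hp x y) _ (hp z w) ?_
  rwa [hpc x y, ← hpc x 0, hpc' x y, ← hpc' 0 y]

theorem exists_finset_not_realizesGrid (n : ℕ) : ∃ T : Finset (ℕ × ℕ),
    ∀ (L : Fin 3 → ℕ → Set Pt) (t : ℕ × ℕ → Set Pt), (∀ c m, IsRectilinear n (L c m)) →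
      (∀ p, IsRectConnected (t p)) → ¬ RealizesGrid T L t := by
  -- A colour records which pieces of the lines through `p` meet `t p`, the directions of the
  -- pieces, and which pairs of them meet.
  obtain ⟨T, hT⟩ := exists_finset_mono_homothetic_copy
    (κ := (Fin 3 → Fin n → Prop) × (Fin 3 → Fin n → Bool) ×
      (Fin 3 → Fin 3 → Fin n → Fin n → Prop)) square
  refine ⟨T, fun L t hL ht grid => ?_⟩
  choose _ o P hP hPL using hL
  obtain ⟨a, ha, b, ⟨met, dir, disj⟩, hab⟩ := hT fun p =>
    (fun c s => ¬ Disjoint (t p) (P c (lineIndex c p) s), fun c s => o c (lineIndex c p) s,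
      fun c c' s s' => Disjoint (P c (lineIndex c p) s) (P c' (lineIndex c' p) s'))
  simp only [Prod.mk.injEq, funext_iff, eq_iff_iff] at hab
  have copy := grid.homothetic ha fun p hp => (hab p hp).1
  have exists_met (c : Fin 3) : ∃ s, met c s := by
    have zero_mem : (0 : ℕ × ℕ) ∈ square := by simp
    have := mt (copy.cell_line c 0 zero_mem 0 zero_mem).1 (not_not.2 rfl)
    rw [← hPL, disjoint_iUnion_right, not_forall, ← lineIndex_smul_add] at this
    simpa only [(hab 0 zero_mem).2.1] using this
  choose s hs using exists_met
  have pieces := copy.mono (L' := fun c m => P c (a * m + lineIndex c b) (s c))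
    (fun c m => (subset_iUnion _ (s c)).trans_eq (hPL c _)) fun c p hp => by
      rw [← lineIndex_smul_add, (hab p hp).2.1]
      exact hs c
  refine pieces.false_of_homogeneous (fun c => dir c (s c)) (fun c p hp => ?_) (fun p _ => ht _)
    fun c c' p hp q hq => ?_
  · rw [← lineIndex_smul_add, ← (hab p hp).2.2.1]
    exact hP c _ _
  · simp only [← lineIndex_smul_add, (hab p hp).2.2.2, (hab q hq).2.2.2, imp_self]

/-- The vertices of the intersection graph of the triangular grid with set of cells `T`: the lines
`(c, m)` passing through cells of `T`, and the cells of `T` themselves. -/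
def gridVertices (T : Finset (ℕ × ℕ)) : Finset ((Fin 3 × ℕ) ⊕ (ℕ × ℕ)) :=
  ((Finset.univ ×ˢ T).image fun x => (x.1, lineIndex x.1 x.2)).disjSum T

theorem RealizesGrid.of_disjoint_iff {α β : Type*} {T : Finset (ℕ × ℕ)}
    {f : (Fin 3 × ℕ) ⊕ (ℕ × ℕ) → Set α} {g : (Fin 3 × ℕ) ⊕ (ℕ × ℕ) → Set β}
    (h : RealizesGrid T (fun c m => f (.inl (c, m))) (fun p => f (.inr p)))
    (hfg : ∀ u ∈ gridVertices T, ∀ v ∈ gridVertices T, u ≠ v →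
      (Disjoint (g u) (g v) ↔ Disjoint (f u) (f v))) :
    RealizesGrid T (fun c m => g (.inl (c, m))) (fun p => g (.inr p)) := by
  have line_mem (c : Fin 3) {p : ℕ × ℕ} (hp : p ∈ T) :
      .inl (c, lineIndex c p) ∈ gridVertices T :=
    Finset.inl_mem_disjSum.2 (Finset.mem_image.2 ⟨(c, p), by simp [hp], rfl⟩)
  have cell_mem {p : ℕ × ℕ} (hp : p ∈ T) : .inr p ∈ gridVertices T := Finset.inr_mem_disjSum.2 hp
  refine ⟨fun c p hp q hq hpq => ?_, fun p hp q hq hpq => ?_, fun c p hp q hq => ?_⟩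
  · exact (hfg _ (line_mem c hp) _ (line_mem c hq) (by simpa using hpq)).2
      (h.line_disjoint c p hp q hq hpq)
  · exact (hfg _ (cell_mem hp) _ (cell_mem hq) (by simpa using hpq)).2
      (h.cell_disjoint p hp q hq hpq)
  · exact (hfg _ (cell_mem hp) _ (line_mem c hq) Sum.inr_ne_inl).trans (h.cell_line c p hp q hq)

end TriangularGrid

section Segments

/-- The directions of the columns, the rows and the antidiagonals. -/
def gridDirection : Fin 3 → Pt := ![(0, 1), (1, 0), (-1, 1)]

/-- The ends of the segments of the triangular grid: lines `(c, m)` of length about `ℓ`, starting on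
a coordinate axis, and a short vertical segment for each cell `p`, starting at the point `p`. -/
noncomputable def gridSegment (ℓ : ℕ) : (Fin 3 × ℕ) ⊕ (ℕ × ℕ) → Pt × Pt
  | .inl (c, m) =>
    let base : Pt := ![((m : ℝ), (0 : ℝ)), ((0 : ℝ), (m : ℝ)), ((m : ℝ), (0 : ℝ))] c
    (base, base + (ℓ + 1 : ℝ) • gridDirection c)
  | .inr p =>
    let base : Pt := (p.1, p.2)
    (base, base + (1 / 2 : ℝ) • gridDirection 0)

/-- The segment with ends `gridSegment ℓ v`. -/
def gridSet (ℓ : ℕ) (v : (Fin 3 × ℕ) ⊕ (ℕ × ℕ)) : Set Pt :=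
  segment ℝ (gridSegment ℓ v).1 (gridSegment ℓ v).2

theorem exists_gridSegment_sub (ℓ : ℕ) (v : (Fin 3 × ℕ) ⊕ (ℕ × ℕ)) :
    ∃ c : Fin 3, ∃ r : ℝ, 0 < r ∧
      (gridSegment ℓ v).2 - (gridSegment ℓ v).1 = r • gridDirection c := by
  rcases v with ⟨c, m⟩ | p
  · exact ⟨c, ℓ + 1, by positivity, add_sub_cancel_left _ _⟩
  · exact ⟨0, 1 / 2, by positivity, add_sub_cancel_left _ _⟩

/-- The real version of `lineIndex`; `gridCoord c` is constant on the lines of the family `c`. -/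
def gridCoord : Fin 3 → (Pt →ₗ[ℝ] ℝ) :=
  ![.fst ℝ ℝ ℝ, .snd ℝ ℝ ℝ, .fst ℝ ℝ ℝ + .snd ℝ ℝ ℝ]

theorem gridCoord_of_mem_line {ℓ : ℕ} {c : Fin 3} {m : ℕ} {x : Pt}
    (hx : x ∈ gridSet ℓ (.inl (c, m))) : gridCoord c x = m := by
  rw [gridSet, segment_eq_image'] at hx
  obtain ⟨r, -, rfl⟩ := hx
  have direction : gridCoord c (gridDirection c) = 0 := by
    fin_cases c <;> simp [gridCoord, gridDirection]
  simp only [gridSegment, add_sub_cancel_left, map_add, map_smul, direction, smul_zero, add_zero]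
  fin_cases c <;> simp [gridCoord]

theorem floor_gridCoord_of_mem_cell {ℓ : ℕ} {p : ℕ × ℕ} {x : Pt} (hx : x ∈ gridSet ℓ (.inr p))
    (c : Fin 3) : ⌊gridCoord c x⌋₊ = lineIndex c p := by
  rw [gridSet, segment_eq_image'] at hx
  obtain ⟨r, ⟨hr0, hr1⟩, rfl⟩ := hx
  have base : gridCoord c (p.1, p.2) = lineIndex c p := by
    fin_cases c <;> simp [gridCoord, lineIndex]
  have direction : gridCoord c (gridDirection 0) ∈ Icc 0 1 := by
    fin_cases c <;> simp [gridCoord, gridDirection]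
  refine Nat.floor_eq_on_Ico _ _ ?_
  simp only [gridSegment, add_sub_cancel_left, map_add, map_smul, base, smul_eq_mul]
  constructor <;> nlinarith [mul_nonneg hr0 direction.1, mul_le_one₀ hr1 direction.1 direction.2]

theorem mem_gridSet_cell (ℓ : ℕ) (p : ℕ × ℕ) : ((p.1, p.2) : Pt) ∈ gridSet ℓ (.inr p) :=
  left_mem_segment _ _ _

theorem mem_gridSet_line {ℓ : ℕ} (c : Fin 3) {p : ℕ × ℕ} (hp : p.1 ≤ ℓ ∧ p.2 ≤ ℓ) :
    ((p.1, p.2) : Pt) ∈ gridSet ℓ (.inl (c, lineIndex c p)) := by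
  let s : ℕ := ![p.2, p.1, p.2] c
  have hs : (s : ℝ) ≤ ℓ := Nat.cast_le.2 (by fin_cases c <;> simp [s, hp])
  have eq_base_add : ((p.1, p.2) : Pt) =
      (gridSegment ℓ (.inl (c, lineIndex c p))).1 + (s : ℝ) • gridDirection c := by
    fin_cases c <;> simp [gridSegment, gridDirection, lineIndex, s]
  rw [gridSet, segment_eq_image']
  refine ⟨s / (ℓ + 1), ⟨by positivity, (div_le_one (by positivity)).2 (by linarith)⟩, ?_⟩
  simp only [eq_base_add, gridSegment, add_sub_cancel_left, smul_smul]
  rw [div_mul_cancel₀ _ (by positivity)]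

theorem realizesGrid_gridSet {ℓ : ℕ} {T : Finset (ℕ × ℕ)} (hT : ∀ p ∈ T, p.1 ≤ ℓ ∧ p.2 ≤ ℓ) :
    RealizesGrid T (fun c m => gridSet ℓ (.inl (c, m))) (fun p => gridSet ℓ (.inr p)) := by
  refine ⟨fun c p _ q _ hpq => ?_, fun p _ q _ hpq => ?_, fun c p hp q _ => ⟨?_, fun hpq => ?_⟩⟩
  · refine disjoint_left.2 fun x hx hx' => hpq ?_
    exact_mod_cast (gridCoord_of_mem_line hx).symm.trans (gridCoord_of_mem_line hx')
  · refine disjoint_left.2 fun x hx hx' => hpq ?_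
    have index_eq (c : Fin 3) : lineIndex c p = lineIndex c q :=
      (floor_gridCoord_of_mem_cell hx c).symm.trans (floor_gridCoord_of_mem_cell hx' c)
    exact Prod.ext (index_eq 0) (index_eq 1)
  · exact fun hd heq =>
      disjoint_left.1 hd (mem_gridSet_cell ℓ p) (heq ▸ mem_gridSet_line c (hT p hp))
  · refine disjoint_left.2 fun x hx hx' => hpq ?_
    rw [← floor_gridCoord_of_mem_cell hx c, gridCoord_of_mem_line hx', Nat.floor_natCast]

/-- The intersection graph of a family of sets. -/
def intersectionGraph {V α : Type*} (S : V → Set α) : SimpleGraph V where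
  Adj u v := u ≠ v ∧ (S u ∩ S v).Nonempty
  symm := ⟨fun u v h => ⟨h.1.symm, inter_comm (S u) (S v) ▸ h.2⟩⟩
  loopless := ⟨fun _ h => h.1 rfl⟩

theorem in3DIR_intersectionGraph_gridSet {V : Type*} (ℓ : ℕ) (v : V → (Fin 3 × ℕ) ⊕ (ℕ × ℕ)) :
    In3DIR (intersectionGraph fun i => gridSet ℓ (v i)) := by
  refine ⟨gridDirection, fun i => gridSegment ℓ (v i), fun i h => ?_, fun i => ?_,
    fun i j hij => (and_iff_right hij).symm⟩
  · obtain ⟨c, r, hr, hsub⟩ := exists_gridSegment_sub ℓ (v i)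
    rw [h, sub_self, eq_comm, smul_eq_zero_iff_right hr.ne'] at hsub
    revert hsub
    fin_cases c <;> simp [gridDirection]
  · exact (exists_gridSegment_sub ℓ (v i)).imp fun _ => Exists.imp fun _ => And.right

end Segments

theorem exists_3DIR_graph_not_in_Bk_VPG_general (n : ℕ) :
    ∃ (N : ℕ) (G : SimpleGraph (Fin N)), In3DIR G ∧ ¬ ∃ R : Fin N → Set Pt,
      (∀ v, IsRectilinear n (R v)) ∧ ∀ u v, u ≠ v → ((R u ∩ R v).Nonempty ↔ G.Adj u v) := by
  obtain ⟨T, hT⟩ := exists_finset_not_realizesGrid n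
  obtain ⟨ℓ, hℓ⟩ := T.exists_le
  let e := (gridVertices T).equivFin
  let v (i : Fin (gridVertices T).card) : (Fin 3 × ℕ) ⊕ (ℕ × ℕ) := e.symm i
  have hv : Function.Injective v := Subtype.val_injective.comp e.symm.injective
  refine ⟨_, _, in3DIR_intersectionGraph_gridSet (max ℓ.1 ℓ.2) v, fun ⟨R, hR, hadj⟩ => ?_⟩
  let R' := Function.extend v R fun _ => ∅
  have hR'v (i) : R' (v i) = R i := hv.extend_apply R _ i
  have hR' (x) : IsRectilinear n (R' x) := by
    by_cases hx : ∃ i, v i = x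
    · obtain ⟨i, rfl⟩ := hx
      exact hR'v i ▸ hR i
    · rw [show R' x = ∅ from Function.extend_apply' R _ x hx]
      exact isRectilinear_empty n
  refine hT (fun c m => R' (.inl (c, m))) (fun p => R' (.inr p)) (fun _ _ => hR' _)
    (fun _ => (hR' _).1) (RealizesGrid.of_disjoint_iff (f := gridSet (max ℓ.1 ℓ.2))
      (realizesGrid_gridSet fun p hp => ?_) fun x hx y hy hxy => ?_)
  · exact ⟨(hℓ p hp).1.trans (le_max_left _ _), (hℓ p hp).2.trans (le_max_right _ _)⟩
  · obtain ⟨i, rfl⟩ : ∃ i, v i = x := ⟨e ⟨x, hx⟩, by simp [v]⟩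
    obtain ⟨j, rfl⟩ : ∃ j, v j = y := ⟨e ⟨y, hy⟩, by simp [v]⟩
    have hij : i ≠ j := fun h => hxy (congrArg v h)
    rw [hR'v, hR'v, ← not_iff_not, not_disjoint_iff_nonempty_inter, not_disjoint_iff_nonempty_inter,
      hadj i j hij]
    exact and_iff_right hij

theorem In3DIR.inSEG {V : Type*} {G : SimpleGraph V} (h : In3DIR G) : InSEG G := by
  obtain ⟨-, S, hne, -, hadj⟩ := h
  exact ⟨S, hne, hadj⟩

/-- For every `k ≥ 0` there is a 3-DIR graph with no `B_k`-VPG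
representation; consequently there is no `k` with SEG ⊆ `B_k`-VPG. -/
theorem exists_3DIR_graph_not_in_Bk_VPG :
    (∀ k : ℕ, ∃ (n : ℕ) (G : SimpleGraph (Fin n)), In3DIR G ∧ ¬ InBkVPG k G) ∧
    ¬ ∃ k : ℕ, ∀ (n : ℕ) (G : SimpleGraph (Fin n)), InSEG G → InBkVPG k G := by
  have exists_not_inBkVPG (k : ℕ) :
      ∃ (n : ℕ) (G : SimpleGraph (Fin n)), In3DIR G ∧ ¬ InBkVPG k G := by
    obtain ⟨n, G, hG, hR⟩ := exists_3DIR_graph_not_in_Bk_VPG_general (k + 1)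
    exact ⟨n, G, hG, fun ⟨R, hk, hadj⟩ =>
      hR ⟨fun v => Im (R v), fun v => (hk v).isRectilinear, hadj⟩⟩
  refine ⟨exists_not_inBkVPG, fun ⟨k, hk⟩ => ?_⟩
  obtain ⟨n, G, hG, hnot⟩ := exists_not_inBkVPG k
  exact hnot (hk n G hG.inSEG)
end

section
/- A bipartite simple graph has a B_0-VPG representation (a representation by horizontal and vertical straight segments in the plane, where segments of the same direction may overlap) if and only if it has a grid intersection representation, i.e., a representation by horizontal and vertical straight segments in which no two segments of the same direction share a common point. -/
/-!
Segments are degenerate boxes, and the argument works for arbitrary boxes. Pairwise disjoint boxes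
can be numbered from south-west to north-east: `u` comes before `v` whenever the lower left corner
of `u` is dominated by the upper right corner of `v`. Reflecting the plane, they can also be
numbered from south-east to north-west.

Let `f` be a numbering of the first kind of one colour class and `g` one of the second kind of the
other. Draw a vertex `a` of the first class horizontally at height `f a`, spanning the `g`-values
of its neighbours, and a vertex `b` of the second class vertically at abscissa `g b`, spanning the
`f`-values of its neighbours. Adjacent vertices cross. If `a` and `b` are not adjacent, a line
separates their boxes, so that, up to symmetry, all of the box of `b` lies to the left of the box
of `a`. If `a` reaches at least as high as `b`, every box meeting `b` precedes `a` in the first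
numbering; otherwise every box meeting `a` precedes `b` in the second. Either way one of the two
drawn segments stays on one side of the other.
-/

open Set Metric

/-- The segment with endpoints `e.1, e.2` is horizontal or vertical. -/
def AxisParallelSeg (e : Pt × Pt) : Prop := e.1.1 = e.2.1 ∨ e.1.2 = e.2.2

/-- `S` is an intersection representation of `G` by straight line segments. -/
def SegRep {V : Type*} (G : SimpleGraph V) (S : V → Pt × Pt) : Prop :=
  ∀ u v : V, u ≠ v →
    ((segment ℝ (S u).1 (S u).2 ∩ segment ℝ (S v).1 (S v).2).Nonempty ↔ G.Adj u v)

section Boxes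

variable {V α β : Type*}

lemma nonemptyInterval_inter_nonempty_iff [Lattice α] {a b : NonemptyInterval α} :
    ((a : Set α) ∩ b).Nonempty ↔ a.fst ≤ b.snd ∧ b.fst ≤ a.snd := by
  simp only [NonemptyInterval.coe_def, Icc_inter_Icc, nonempty_Icc, sup_le_iff, le_inf_iff,
    a.fst_le_snd, b.fst_le_snd, true_and, and_true]
  exact and_comm

/-- Intersection representation of a graph by order intervals. For `α = ℝ × ℝ` the intervals are the
axis-parallel boxes, possibly degenerate: such a representation witnesses boxicity at most two. -/
def IsBoxRep [Preorder α] (G : SimpleGraph V) (B : V → NonemptyInterval α) : Prop :=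
  ∀ u v : V, u ≠ v → (((B u : Set α) ∩ B v).Nonempty ↔ G.Adj u v)

lemma IsBoxRep.pairwiseDisjoint [Preorder α] {G : SimpleGraph V} {B : V → NonemptyInterval α}
    (hB : IsBoxRep G B) {s : Set V} (hs : G.IsIndepSet s) :
    s.PairwiseDisjoint fun v => (B v : Set α) := fun u hu v hv huv =>
  not_not.1 fun h => hs hu hv huv ((hB u v huv).1 (not_disjoint_iff_nonempty_inter.1 h))

/-- The reflection of a box in a vertical line, encoded by reversing the order of the first factor.
It turns the south-west to north-east order of boxes into the south-east to north-west order. -/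
def mirror [Preorder α] [Preorder β] (b : NonemptyInterval (α × β)) :
    NonemptyInterval (αᵒᵈ × β) where
  fst := (OrderDual.toDual b.snd.1, b.fst.2)
  snd := (OrderDual.toDual b.fst.1, b.snd.2)
  fst_le_snd := ⟨b.fst_le_snd.1, b.fst_le_snd.2⟩

lemma mirror_inter_mirror_nonempty_iff [Lattice α] [Lattice β] {a b : NonemptyInterval (α × β)} :
    ((mirror a : Set (αᵒᵈ × β)) ∩ mirror b).Nonempty ↔ ((a : Set (α × β)) ∩ b).Nonempty := by
  simp only [nonemptyInterval_inter_nonempty_iff, mirror, Prod.le_def, OrderDual.toDual_le_toDual]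
  tauto

lemma IsBoxRep.mirror [Lattice α] [Lattice β] {G : SimpleGraph V}
    {B : V → NonemptyInterval (α × β)} (hB : IsBoxRep G B) :
    IsBoxRep G fun v => mirror (B v) := fun u v huv =>
  mirror_inter_mirror_nonempty_iff.trans (hB u v huv)

lemma snd_lt_fst_of_disjoint [LinearOrder α] [LinearOrder β] {a b : NonemptyInterval (α × β)}
    (h : Disjoint (a : Set (α × β)) b) :
    (b.snd.1 < a.fst.1 ∨ b.snd.2 < a.fst.2) ∨ (a.snd.1 < b.fst.1 ∨ a.snd.2 < b.fst.2) := by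
  by_contra! hle
  exact (nonemptyInterval_inter_nonempty_iff.2 hle).not_disjoint h

lemma corner_le_corner_of_disjoint [LinearOrder α] [LinearOrder β]
    {a b : NonemptyInterval (α × β)} (h : Disjoint (a : Set (α × β)) b) :
    (b.snd ≤ a.snd ∨ a.fst ≤ b.fst) ∨
      ((mirror a).snd ≤ (mirror b).snd ∨ (mirror b).fst ≤ (mirror a).fst) := by
  obtain ⟨ha₁, ha₂⟩ := a.fst_le_snd
  obtain ⟨hb₁, hb₂⟩ := b.fst_le_snd
  rcases snd_lt_fst_of_disjoint h with (hleft | hbelow) | (hright | habove)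
  · rcases le_total b.snd.2 a.snd.2 with htop | htop
    · exact Or.inl (Or.inl ⟨hleft.le.trans ha₁, htop⟩)
    · exact Or.inr (Or.inl ⟨hb₁.trans hleft.le, htop⟩)
  · rcases le_total b.snd.1 a.snd.1 with hend | hend
    · exact Or.inl (Or.inl ⟨hend, hbelow.le.trans ha₂⟩)
    · exact Or.inr (Or.inr ⟨hend, hb₂.trans hbelow.le⟩)
  · rcases le_total a.fst.2 b.fst.2 with hbottom | hbottom
    · exact Or.inl (Or.inr ⟨ha₁.trans hright.le, hbottom⟩)
    · exact Or.inr (Or.inr ⟨hright.le.trans hb₁, hbottom⟩)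
  · rcases le_total a.fst.1 b.fst.1 with hstart | hstart
    · exact Or.inl (Or.inr ⟨hstart, ha₂.trans habove.le⟩)
    · exact Or.inr (Or.inl ⟨hstart, habove.le.trans hb₂⟩)

end Boxes

section Numbering

variable {ι α β : Type*}

/-- `f` numbers the boxes `B i`, `i ∈ s`, from south-west to north-east: `i` comes before `j` as
soon as the lower corner of `B i` is dominated by the upper corner of `B j`. -/
def IsSouthwestNumbering [Preorder α] (B : ι → NonemptyInterval α) (s : Set ι) (f : ι → ℝ) :
    Prop :=
  ∀ ⦃i⦄, i ∈ s → ∀ ⦃j⦄, j ∈ s → i ≠ j → (B i).fst ≤ (B j).snd → f i < f j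

/-- Induct by inserting a box `a` whose right end is leftmost. If `a` precedes the south-west-most
box `t` of the others, then `a` is minimal: a predecessor `c` of `a` spans the right end of `a`, so
it lies below `a` and would precede `t` too. -/
lemma exists_southwest_minimal [LinearOrder α] [LinearOrder β] {B : ι → NonemptyInterval (α × β)}
    {s : Finset ι} (hs : s.Nonempty)
    (hB : (s : Set ι).PairwiseDisjoint fun i => (B i : Set (α × β))) :
    ∃ m ∈ s, ∀ i ∈ s, i ≠ m → ¬ (B i).fst ≤ (B m).snd := by
  classical
  induction s using Finset.induction_on_min_value (fun i => (B i).snd.1) with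
  | empty => simp at hs
  | insert a s has hmin ih =>
    rcases s.eq_empty_or_nonempty with rfl | hne
    · exact ⟨a, by simp⟩
    obtain ⟨t, hts, ht⟩ := ih hne (hB.subset (by simp))
    by_cases hat : (B a).fst ≤ (B t).snd
    · refine ⟨a, Finset.mem_insert_self a s, fun c hc hca hle => ?_⟩
      have hcs : c ∈ s := Finset.mem_of_mem_insert_of_ne hc hca
      have hbelow : (B c).snd.2 < (B a).fst.2 := by
        by_contra! h
        exact (nonemptyInterval_inter_nonempty_iff.2
          ⟨hle, (B a).fst_le_snd.1.trans (hmin c hcs), h⟩).not_disjoint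
            (hB (by simp [hcs]) (by simp) hca)
      have hct : c ≠ t := fun h => (h ▸ hbelow).not_ge hat.2
      exact ht c hcs hct ⟨hle.1.trans (hmin t hts),
        (B c).fst_le_snd.2.trans (hbelow.le.trans hat.2)⟩
    · exact ⟨t, Finset.mem_insert_of_mem hts, by grind⟩

lemma exists_injective_lt_of_wellFounded [Countable ι] [LinearOrder β] [DenselyOrdered β]
    [Nontrivial β] {r : ι → ι → Prop} (hr : WellFounded r) :
    ∃ f : ι → β, f.Injective ∧ ∀ i j, r i j → f i < f j := by
  classical
  have : IsWellFounded ι r := ⟨hr⟩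
  obtain ⟨s, hrs, _⟩ := IsWellFounded.exists_well_order_ge r
  let _ : LinearOrder ι := linearOrderOfSTO s
  obtain ⟨e⟩ := Order.embedding_from_countable_to_dense ι β
  exact ⟨e, e.injective, fun i j hij => e.strictMono (hrs i j hij)⟩

lemma exists_isSouthwestNumbering [Finite ι] [LinearOrder α] [LinearOrder β]
    {B : ι → NonemptyInterval (α × β)} {s : Set ι}
    (hB : s.PairwiseDisjoint fun i => (B i : Set (α × β))) :
    ∃ f : ι → ℝ, f.Injective ∧ IsSouthwestNumbering B s f := by
  have hwf : WellFounded fun i j => i ∈ s ∧ j ∈ s ∧ i ≠ j ∧ (B i).fst ≤ (B j).snd := by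
    refine WellFounded.wellFounded_iff_has_min.2 fun t ht => ?_
    by_cases hts : (t ∩ s).Nonempty
    · have hfin := (t ∩ s).toFinite
      obtain ⟨m, hm, hmin⟩ := exists_southwest_minimal (B := B) (s := hfin.toFinset)
        (by simpa using hts) (by simpa using hB.subset inter_subset_right)
      rw [hfin.mem_toFinset] at hm
      exact ⟨m, hm.1, fun i hit ⟨his, _, him, hle⟩ =>
        hmin i (hfin.mem_toFinset.2 ⟨hit, his⟩) him hle⟩
    · obtain ⟨m, hm⟩ := ht
      exact ⟨m, hm, fun i _ h => hts ⟨m, hm, h.2.1⟩⟩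
  obtain ⟨f, hinj, hf⟩ := exists_injective_lt_of_wellFounded (β := ℝ) hwf
  exact ⟨f, hinj, fun i hi j hj hij hle => hf i j ⟨hi, hj, hij, hle⟩⟩

lemma IsSouthwestNumbering.notMem_convexHull [Lattice α] {B : ι → NonemptyInterval α} {s N : Set ι}
    {f : ι → ℝ} (hf : IsSouthwestNumbering B s f) {b : NonemptyInterval α} (hNs : N ⊆ s)
    (hNb : ∀ i ∈ N, ((B i : Set α) ∩ b).Nonempty) {a : ι} (ha : a ∈ s) (haN : a ∉ N)
    (hab : b.snd ≤ (B a).snd ∨ (B a).fst ≤ b.fst) :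
    f a ∉ convexHull ℝ (f '' N) := by
  simp only [nonemptyInterval_inter_nonempty_iff] at hNb
  rcases hab with hsnd | hfst
  · have hlt : f '' N ⊆ Iio (f a) := by
      rintro _ ⟨i, hi, rfl⟩
      exact hf (hNs hi) ha (ne_of_mem_of_not_mem hi haN) ((hNb i hi).1.trans hsnd)
    exact fun h => lt_irrefl (f a) (convexHull_min hlt (convex_Iio _) h)
  · have hgt : f '' N ⊆ Ioi (f a) := by
      rintro _ ⟨i, hi, rfl⟩
      exact hf ha (hNs hi) (ne_of_mem_of_not_mem hi haN).symm (hfst.trans (hNb i hi).2)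
    exact fun h => lt_irrefl (f a) (convexHull_min hgt (convex_Ioi _) h)

end Numbering

section Segments

lemma segment_horizontal {l h : ℝ} (hlh : l ≤ h) (y : ℝ) :
    segment ℝ ((l, y) : Pt) (h, y) = Icc l h ×ˢ {y} := by
  rw [← Prod.image_mk_segment_left, segment_eq_Icc hlh, prod_singleton]

lemma segment_vertical {l h : ℝ} (hlh : l ≤ h) (x : ℝ) :
    segment ℝ ((x, l) : Pt) (x, h) = {x} ×ˢ Icc l h := by
  rw [← Prod.image_mk_segment_right, segment_eq_Icc hlh, singleton_prod]

lemma segment_eq_uIcc_of_axisParallelSeg {e : Pt × Pt} (he : AxisParallelSeg e) :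
    segment ℝ e.1 e.2 = uIcc e.1 e.2 := by
  obtain ⟨⟨x, y⟩, x', y'⟩ := e
  rcases he with h | h
  · obtain rfl : x = x' := h
    rw [← Prod.image_mk_segment_right, segment_eq_uIcc, ← uIcc_prod_uIcc, uIcc_self,
      singleton_prod]
  · obtain rfl : y = y' := h
    rw [← Prod.image_mk_segment_left, segment_eq_uIcc, ← uIcc_prod_uIcc, uIcc_self,
      prod_singleton]

lemma SegRep.isBoxRep {V : Type*} {G : SimpleGraph V} {S : V → Pt × Pt} (hS : SegRep G S)
    (hax : ∀ v, AxisParallelSeg (S v)) :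
    IsBoxRep G fun v => ⟨((S v).1 ⊓ (S v).2, (S v).1 ⊔ (S v).2), inf_le_sup⟩ := by
  intro u v huv
  rw [← hS u v huv, segment_eq_uIcc_of_axisParallelSeg (hax u),
    segment_eq_uIcc_of_axisParallelSeg (hax v)]
  rfl

end Segments

section GridRep

variable {V : Type*} {G : SimpleGraph V} {A : Set V} {S : V → Pt × Pt}

/-- A grid intersection representation: an intersection representation by nondegenerate horizontal
and vertical segments in which segments of the same orientation are disjoint. -/
def IsGridRep (G : SimpleGraph V) (S : V → Pt × Pt) : Prop :=
  (∀ v, (S v).1 ≠ (S v).2) ∧ (∀ v, AxisParallelSeg (S v)) ∧ SegRep G S ∧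
    ∀ u v : V, u ≠ v →
      ((((S u).1.2 = (S u).2.2 ∧ (S v).1.2 = (S v).2.2) →
        segment ℝ (S u).1 (S u).2 ∩ segment ℝ (S v).1 (S v).2 = ∅) ∧
       (((S u).1.1 = (S u).2.1 ∧ (S v).1.1 = (S v).2.1) →
        segment ℝ (S u).1 (S u).2 ∩ segment ℝ (S v).1 (S v).2 = ∅))

lemma isIndepSet_of_isBipartiteWith {s t : Set V} (h : G.IsBipartiteWith s t) : G.IsIndepSet s :=
  fun _ hu _ hv _ huv => h.disjoint.notMem_of_mem_left hv (h.mem_of_mem_adj hu huv)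

lemma SegRep.isGridRep (hS : SegRep G S) (hA : G.IsBipartiteWith A Aᶜ)
    (hhor : ∀ v ∈ A, (S v).1.2 = (S v).2.2 ∧ (S v).1.1 ≠ (S v).2.1)
    (hver : ∀ v ∉ A, (S v).1.1 = (S v).2.1 ∧ (S v).1.2 ≠ (S v).2.2) : IsGridRep G S := by
  have hempty {s t : Set V} (hs : G.IsBipartiteWith s t) {u v : V} (huv : u ≠ v) (hu : u ∈ s)
      (hv : v ∈ s) : segment ℝ (S u).1 (S u).2 ∩ segment ℝ (S v).1 (S v).2 = ∅ :=
    not_nonempty_iff_eq_empty.1 fun h =>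
      isIndepSet_of_isBipartiteWith hs hu hv huv ((hS u v huv).1 h)
  have hmem_of_horizontal {v : V} (h : (S v).1.2 = (S v).2.2) : v ∈ A :=
    by_contra fun hv => (hver v hv).2 h
  have hnotMem_of_vertical {v : V} (h : (S v).1.1 = (S v).2.1) : v ∈ Aᶜ :=
    fun hv => (hhor v hv).2 h
  refine ⟨fun v h => ?_, fun v => ?_, hS, fun u v huv => ⟨fun h => ?_, fun h => ?_⟩⟩
  · exact hnotMem_of_vertical (congrArg Prod.fst h) (hmem_of_horizontal (congrArg Prod.snd h))
  · by_cases hv : v ∈ A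
    · exact Or.inr (hhor v hv).1
    · exact Or.inl (hver v hv).1
  · exact hempty hA huv (hmem_of_horizontal h.1) (hmem_of_horizontal h.2)
  · exact hempty hA.symm huv (hnotMem_of_vertical h.1) (hnotMem_of_vertical h.2)

lemma segRep_of_isBipartiteWith {s t : Set V} (h : G.IsBipartiteWith s t)
    (hst : s ∪ t = univ)
    (hs : s.PairwiseDisjoint fun v => segment ℝ (S v).1 (S v).2)
    (ht : t.PairwiseDisjoint fun v => segment ℝ (S v).1 (S v).2)
    (hcross : ∀ a ∈ s, ∀ b ∈ t,
      ((segment ℝ (S a).1 (S a).2 ∩ segment ℝ (S b).1 (S b).2).Nonempty ↔ G.Adj a b)) :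
    SegRep G S := by
  intro u v huv
  rcases hst.ge (mem_univ u) with hu | hu <;> rcases hst.ge (mem_univ v) with hv | hv
  · exact iff_of_false (not_nonempty_iff_eq_empty.2 (hs hu hv huv).inter_eq)
      (isIndepSet_of_isBipartiteWith h hu hv huv)
  · exact hcross u hu v hv
  · rw [inter_comm, G.adj_comm]
    exact hcross v hv u hu
  · exact iff_of_false (not_nonempty_iff_eq_empty.2 (ht hu hv huv).inter_eq)
      (isIndepSet_of_isBipartiteWith h.symm hu hv huv)

/-- For `N = ∅` this is a nondegenerate interval avoiding `F`, as needed for isolated vertices. -/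
lemma exists_Icc_inter_eq_convexHull_inter (F N : Finset ℝ) :
    ∃ l h : ℝ, l < h ∧ ∀ y ∈ F, y ∈ Icc l h ↔ y ∈ convexHull ℝ (N : Set ℝ) := by
  obtain ⟨l, hFl, hlN⟩ := Order.exists_between_finsets {y ∈ F | ∀ n ∈ N, y < n} N
    fun y hy => (Finset.mem_filter.1 hy).2
  obtain ⟨h, hNh, hhF⟩ := Order.exists_between_finsets (insert l N)
    {y ∈ F | ∀ n ∈ insert l N, n < y} fun n hn y hy => (Finset.mem_filter.1 hy).2 n hn
  simp only [Finset.forall_mem_insert] at hNh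
  refine ⟨l, h, hNh.1, fun y hy => ⟨fun ⟨hly, hyh⟩ => ?_, fun hyN => ?_⟩⟩
  · obtain ⟨m, hm, hmy⟩ : ∃ m ∈ N, m ≤ y := by
      by_contra! hlt
      exact (hFl y (Finset.mem_filter.2 ⟨hy, hlt⟩)).not_ge hly
    obtain ⟨n, hn, hyn⟩ : ∃ n ∈ N, y ≤ n := by
      by_contra! hlt
      have hgt : ∀ n ∈ insert l N, n < y := by
        simpa only [Finset.forall_mem_insert] using ⟨(hlN m hm).trans_le hmy, hlt⟩
      exact (hhF y (Finset.mem_filter.2 ⟨hy, hgt⟩)).not_ge hyh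
    exact (convex_convexHull ℝ _).ordConnected.out (subset_convexHull ℝ _ hm)
      (subset_convexHull ℝ _ hn) ⟨hmy, hyn⟩
  · have hN : (N : Set ℝ) ⊆ Icc l h := fun n hn => ⟨(hlN n hn).le, (hNh.2 n hn).le⟩
    exact convexHull_min hN (convex_Icc l h) hyN

lemma exists_Icc_mem_iff_mem_convexHull {ι : Type*} [Finite ι] (k : ι → ℝ) (N : Set ι) :
    ∃ l h : ℝ, l < h ∧ ∀ i, k i ∈ Icc l h ↔ k i ∈ convexHull ℝ (k '' N) := by
  obtain ⟨l, h, hlh, hN⟩ := exists_Icc_inter_eq_convexHull_inter (finite_range k).toFinset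
    (k '' N).toFinite.toFinset
  exact ⟨l, h, hlh, fun i => by simpa using hN (k i) (by simp)⟩

lemma exists_isGridRep_of_convexHull [Finite V] (hA : G.IsBipartiteWith A Aᶜ) {f g : V → ℝ}
    (hf : A.InjOn f) (hg : Aᶜ.InjOn g)
    (hfg : ∀ a ∈ A, ∀ b ∈ Aᶜ, f a ∈ convexHull ℝ (f '' G.neighborSet b) →
      g b ∈ convexHull ℝ (g '' G.neighborSet a) → G.Adj a b) :
    ∃ S, IsGridRep G S := by
  classical
  choose l h hlh hmem using fun (k : V → ℝ) v =>
    exists_Icc_mem_iff_mem_convexHull k (G.neighborSet v)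
  let S : V → Pt × Pt := fun v =>
    if v ∈ A then ((l g v, f v), (h g v, f v)) else ((g v, l f v), (g v, h f v))
  have hSA {a : V} (ha : a ∈ A) :
      segment ℝ (S a).1 (S a).2 = Icc (l g a) (h g a) ×ˢ {f a} := by
    simp only [S, if_pos ha, segment_horizontal (hlh g a).le]
  have hSB {b : V} (hb : b ∈ Aᶜ) :
      segment ℝ (S b).1 (S b).2 = {g b} ×ˢ Icc (l f b) (h f b) := by
    simp only [S, if_neg hb, segment_vertical (hlh f b).le]
  refine ⟨S, (segRep_of_isBipartiteWith hA (union_compl_self A) ?_ ?_ ?_).isGridRep hA ?_ ?_⟩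
  · intro u hu v hv huv
    simpa only [Function.onFun, hSA hu, hSA hv, disjoint_prod, disjoint_singleton] using
      Or.inr (hf.ne hu hv huv)
  · intro u hu v hv huv
    simpa only [Function.onFun, hSB hu, hSB hv, disjoint_prod, disjoint_singleton] using
      Or.inl (hg.ne hu hv huv)
  · intro a ha b hb
    rw [hSA ha, hSB hb, prod_inter_prod, prod_nonempty_iff, inter_singleton_nonempty,
      singleton_inter_nonempty, hmem, hmem]
    exact ⟨fun ⟨hgb, hfa⟩ => hfg a ha b hb hfa hgb, fun hab =>
      ⟨subset_convexHull ℝ _ (mem_image_of_mem g hab),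
        subset_convexHull ℝ _ (mem_image_of_mem f hab.symm)⟩⟩
  · intro v hv
    simpa [S, hv] using (hlh g v).ne
  · intro v hv
    simpa [S, hv] using (hlh f v).ne

end GridRep

theorem bipartite_B0_VPG_iff_grid_intersection_general {V : Type*} [Finite V]
    {G : SimpleGraph V} {A : Set V} (hA : G.IsBipartiteWith A Aᶜ) :
    (∃ B : V → NonemptyInterval Pt, IsBoxRep G B) ↔ ∃ S, IsGridRep G S := by
  refine ⟨fun ⟨B, hB⟩ => ?_, fun ⟨S, _, hax, hS, _⟩ => ⟨_, hS.isBoxRep hax⟩⟩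
  obtain ⟨f, hf_inj, hf⟩ :=
    exists_isSouthwestNumbering (hB.pairwiseDisjoint (isIndepSet_of_isBipartiteWith hA))
  obtain ⟨g, hg_inj, hg⟩ := exists_isSouthwestNumbering
    (hB.mirror.pairwiseDisjoint (isIndepSet_of_isBipartiteWith hA.symm))
  refine exists_isGridRep_of_convexHull hA hf_inj.injOn hg_inj.injOn fun a ha b hb hfa hgb => ?_
  by_contra hab
  have hdisj : Disjoint (B a : Set Pt) (B b) := by
    rwa [← hB a b (ne_of_mem_of_not_mem ha hb), ← not_disjoint_iff_nonempty_inter, not_not] at hab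
  rcases corner_le_corner_of_disjoint hdisj with h | h
  · exact hf.notMem_convexHull (fun c hc => hA.symm.mem_of_mem_adj hb hc)
      (fun c hc => (hB c b (G.ne_of_adj hc).symm).2 (G.adj_symm hc)) ha
      (fun hba => hab (G.adj_symm hba)) h hfa
  · exact hg.notMem_convexHull (fun c hc => hA.mem_of_mem_adj ha hc)
      (fun c hc => (hB.mirror c a (G.ne_of_adj hc).symm).2 (G.adj_symm hc)) hb hab h hgb

/-- A bipartite graph has a `B_0`-VPG representation (horizontal and
vertical segments, overlaps of parallel segments allowed) if and only if it has a grid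
intersection representation (horizontal and vertical segments where no two segments of
the same orientation share a point). -/
theorem bipartite_B0_VPG_iff_grid_intersection {V : Type} [Fintype V] (G : SimpleGraph V)
    (hbip : ∃ A : Set V, ∀ u v : V, G.Adj u v → ((u ∈ A ∧ v ∉ A) ∨ (u ∉ A ∧ v ∈ A))) :
    (∃ S : V → Pt × Pt, (∀ v, (S v).1 ≠ (S v).2) ∧ (∀ v, AxisParallelSeg (S v)) ∧
        SegRep G S)
    ↔
    (∃ S : V → Pt × Pt, (∀ v, (S v).1 ≠ (S v).2) ∧ (∀ v, AxisParallelSeg (S v)) ∧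
        SegRep G S ∧
        (∀ u v : V, u ≠ v →
          ((((S u).1.2 = (S u).2.2 ∧ (S v).1.2 = (S v).2.2) →
            segment ℝ (S u).1 (S u).2 ∩ segment ℝ (S v).1 (S v).2 = ∅) ∧
           (((S u).1.1 = (S u).2.1 ∧ (S v).1.1 = (S v).2.1) →
            segment ℝ (S u).1 (S u).2 ∩ segment ℝ (S v).1 (S v).2 = ∅)))) := by
  obtain ⟨A, hA⟩ := hbip
  exact ⟨fun ⟨S, _, hax, hS⟩ => (bipartite_B0_VPG_iff_grid_intersection_general
    ⟨disjoint_compl_right, hA⟩).1 ⟨_, hS.isBoxRep hax⟩,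
    fun ⟨S, hne, hax, hS, _⟩ => ⟨S, hne, hax, hS⟩⟩
end

section
/- Let k ≥ 1 and let γ and δ be two simple axis-parallel (rectilinear) piecewise-linear curves in the plane. Suppose there are k+1 points p₁, …, p_{k+1} that lie on both γ and δ and appear in this same order along both curves, and suppose that for each i ∈ {1, …, k} the subcurve of γ between p_i and p_{i+1} is not identical to the subcurve of δ between p_i and p_{i+1}. Then the total number of bends of γ plus the number of bends of δ is at least 2k. In particular, γ and δ cannot both have at most k−1 bends. -/
/-!
The bends of each curve that lie strictly between consecutive common points are distinct for
distinct gaps, so it suffices to find two bends, of `γ` and `δ` together, inside each of the `k`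
gaps.

If a gap had at most one, then one of its two subcurves would be straight, so that `p i` and
`p (i + 1)` agree in a coordinate, say the second. The other subcurve is a horizontal or vertical
piece followed by another one. As its endpoints have equal height, a vertical piece next to a
horizontal one would have zero length, and two vertical pieces would give a closed curve; by
simplicity, this subcurve is horizontal as well. A simple arc inside a line traces precisely the
segment between its endpoints, so both subcurves would be the segment from `p i` to `p (i + 1)`.
-/

open Set Metric

lemma exists_le_castSucc_and_succ_le {α : Type*} [LinearOrder α] {n : ℕ} {c : Fin (n + 2) → α}
    {u v : α} (hu : c 0 ≤ u) (hv : v ≤ c (Fin.last (n + 1)))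
    (hc : ∀ i : Fin n, c i.succ.castSucc ∉ Ioo u v) :
    ∃ i : Fin (n + 1), c i.castSucc ≤ u ∧ v ≤ c i.succ := by
  by_contra! hcross
  have hle : ∀ i : Fin (n + 1), c i.castSucc ≤ u := by
    intro i
    induction i using Fin.induction with
    | zero => exact hu
    | succ i ih => exact not_lt.1 fun hlt => hc i ⟨hlt, hcross i.castSucc ih⟩
  exact (hcross (Fin.last n) (hle _)).not_ge hv

lemma pairwise_disjoint_Ioo_castSucc_succ {α : Type*} [Preorder α] {k : ℕ} {s : Fin (k + 1) → α}
    (hs : Monotone s) :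
    Pairwise (Function.onFun Disjoint fun i : Fin k => Ioo (s i.castSucc) (s i.succ)) := by
  refine (pairwise_disjoint_on _).2 fun i j hij => Set.disjoint_left.2 fun x hi hj => ?_
  have hsij : s i.succ ≤ s j.castSucc := hs (Fin.succ_le_castSucc_iff.2 hij)
  exact (hi.2.trans_le hsij).not_gt hj.1

lemma sum_card_filter_mem_Ioo_le {α : Type*} [LinearOrder α] {k : ℕ} {s : Fin (k + 1) → α}
    (hs : Monotone s) (B : Finset α) :
    ∑ i : Fin k, (B.filter (· ∈ Ioo (s i.castSucc) (s i.succ))).card ≤ B.card := by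
  have hdisj (i : Fin k) (_ : i ∈ Finset.univ) (j : Fin k) (_ : j ∈ Finset.univ) (hij : i ≠ j) :
      Disjoint (B.filter (· ∈ Ioo (s i.castSucc) (s i.succ)))
        (B.filter (· ∈ Ioo (s j.castSucc) (s j.succ))) :=
    Finset.disjoint_filter.2 fun _ _ hi hj =>
      Set.disjoint_left.1 (pairwise_disjoint_Ioo_castSucc_succ hs hij) hi hj
  rw [← Finset.card_biUnion hdisj]
  exact Finset.card_le_card (Finset.biUnion_subset.2 fun _ _ => Finset.filter_subset _ _)

lemma image_Icc_eq_uIcc_of_injOn {α β : Type*} [ConditionallyCompleteLinearOrder α]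
    [TopologicalSpace α] [OrderTopology α] [DenselyOrdered α] [LinearOrder β] [TopologicalSpace β]
    [OrderClosedTopology β] {f : α → β} {a b : α} (hab : a ≤ b) (hf : ContinuousOn f (Icc a b))
    (hinj : InjOn f (Icc a b)) : f '' Icc a b = uIcc (f a) (f b) := by
  have hmono := hf.strictMonoOn_of_injOn_Icc' hab hinj
  rw [← uIcc_of_le hab] at hf hmono ⊢
  refine Subset.antisymm ?_ (intermediate_value_uIcc hf)
  exact hmono.elim (fun h => h.monotoneOn.image_uIcc_subset) fun h =>
    h.antitoneOn.image_uIcc_subset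

section Direction

variable {γ : ℝ → Pt} {S T : Set ℝ} {a b m : ℝ}

/-- The part of `γ` with parameters in `S` lies on a horizontal line. -/
def HorizontalOn (γ : ℝ → Pt) (S : Set ℝ) : Prop :=
  ∀ ⦃x⦄, x ∈ S → ∀ ⦃y⦄, y ∈ S → (γ x).2 = (γ y).2

/-- The part of `γ` with parameters in `S` lies on a vertical line. The reflection in the diagonal
turns this into `HorizontalOn (Prod.swap ∘ γ) S` definitionally. -/
def VerticalOn (γ : ℝ → Pt) (S : Set ℝ) : Prop :=
  ∀ ⦃x⦄, x ∈ S → ∀ ⦃y⦄, y ∈ S → (γ x).1 = (γ y).1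

/-- The part of `γ` with parameters in `S` lies on an axis-parallel line. -/
def AxisParallelOn (γ : ℝ → Pt) (S : Set ℝ) : Prop :=
  HorizontalOn γ S ∨ VerticalOn γ S

lemma AxisParallelOn.mono (h : AxisParallelOn γ T) (hST : S ⊆ T) : AxisParallelOn γ S :=
  h.imp (fun h _ hx _ hy => h (hST hx) (hST hy)) fun h _ hx _ hy => h (hST hx) (hST hy)

lemma AxisParallelOn.swap (h : AxisParallelOn γ S) : AxisParallelOn (Prod.swap ∘ γ) S :=
  Or.symm h

lemma AxisAffOn.axisParallelOn (h : AxisAffOn γ a b) : AxisParallelOn γ (Icc a b) := by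
  obtain ⟨p, d, hd, hγ⟩ := h
  refine hd.symm.imp (fun hd x hx y hy => ?_) fun hd x hx y hy => ?_ <;>
    simp only [hγ x hx, hγ y hy, hd, mul_zero]

lemma AxisAffOn.continuousOn (h : AxisAffOn γ a b) : ContinuousOn γ (Icc a b) := by
  obtain ⟨p, d, -, hγ⟩ := h
  exact ContinuousOn.congr (by fun_prop) hγ

lemma HorizontalOn.image_Icc_eq_segment (h : HorizontalOn γ (Icc a b)) (hab : a ≤ b)
    (hcont : ContinuousOn γ (Icc a b)) (hinj : InjOn γ (Icc a b)) :
    γ '' Icc a b = segment ℝ (γ a) (γ b) := by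
  have ha : a ∈ Icc a b := left_mem_Icc.2 hab
  have hb : b ∈ Icc a b := right_mem_Icc.2 hab
  have hinj_fst : InjOn (fun x => (γ x).1) (Icc a b) := fun x hx y hy hxy =>
    hinj hx hy (Prod.ext hxy (h hx hy))
  calc γ '' Icc a b = (fun r => (r, (γ a).2)) '' ((fun x => (γ x).1) '' Icc a b) := by
        rw [image_image]
        exact image_congr fun x hx => Prod.ext rfl (h hx ha)
    _ = (fun r => (r, (γ a).2)) '' segment ℝ (γ a).1 (γ b).1 := by
        rw [image_Icc_eq_uIcc_of_injOn hab hcont.fst hinj_fst, segment_eq_uIcc]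
    _ = segment ℝ (γ a) (γ b) := by
        rw [Prod.image_mk_segment_left, Prod.mk.eta, h ha hb, Prod.mk.eta]

lemma AxisParallelOn.image_Icc_eq_segment (h : AxisParallelOn γ (Icc a b)) (hab : a ≤ b)
    (hcont : ContinuousOn γ (Icc a b)) (hinj : InjOn γ (Icc a b)) :
    γ '' Icc a b = segment ℝ (γ a) (γ b) := by
  rcases h with h | h
  · exact h.image_Icc_eq_segment hab hcont hinj
  · have hswap : Prod.swap ∘ γ '' Icc a b = segment ℝ (γ a).swap (γ b).swap :=
      HorizontalOn.image_Icc_eq_segment h hab (continuous_swap.comp_continuousOn hcont)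
        (Prod.swap_injective.comp_injOn hinj)
    refine Prod.swap_injective.image_injective ?_
    rw [← image_comp, hswap]
    exact (image_segment ℝ (LinearEquiv.prodComm ℝ ℝ ℝ).toLinearMap.toAffineMap _ _).symm

lemma HorizontalOn.of_pieces (hm : m ∈ Icc a b) (hinj : InjOn γ (Icc a b))
    (h₁ : AxisParallelOn γ (Icc a m)) (h₂ : AxisParallelOn γ (Icc m b))
    (hends : (γ a).2 = (γ b).2) : HorizontalOn γ (Icc a b) := by
  have ha : a ∈ Icc a m := left_mem_Icc.2 hm.1
  have hm₁ : m ∈ Icc a m := right_mem_Icc.2 hm.1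
  have hm₂ : m ∈ Icc m b := left_mem_Icc.2 hm.2
  have hb : b ∈ Icc m b := right_mem_Icc.2 hm.2
  have ha' : a ∈ Icc a b := left_mem_Icc.2 (hm.1.trans hm.2)
  have hb' : b ∈ Icc a b := right_mem_Icc.2 (hm.1.trans hm.2)
  rcases h₁ with h₁ | h₁ <;> rcases h₂ with h₂ | h₂
  · have height : ∀ x ∈ Icc a b, (γ x).2 = (γ m).2 := fun x hx =>
      (le_total x m).elim (fun hxm => h₁ ⟨hx.1, hxm⟩ hm₁) fun hmx => h₂ ⟨hmx, hx.2⟩ hm₂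
    exact fun x hx y hy => (height x hx).trans (height y hy).symm
  · obtain rfl : m = b := hinj hm hb' (Prod.ext (h₂ hm₂ hb) ((h₁ hm₁ ha).trans hends))
    exact h₁
  · obtain rfl : a = m := hinj ha' hm (Prod.ext (h₁ ha hm₁) (hends.trans (h₂ hb hm₂)))
    exact h₂
  · obtain rfl : a = b := hinj ha' hb' (Prod.ext ((h₁ ha hm₁).trans (h₂ hm₂ hb)) hends)
    intro x hx y hy
    rw [subsingleton_Icc_of_ge le_rfl hx hy]

lemma AxisParallelOn.of_pieces (hm : m ∈ Icc a b) (hinj : InjOn γ (Icc a b))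
    (h₁ : AxisParallelOn γ (Icc a m)) (h₂ : AxisParallelOn γ (Icc m b))
    (hends : (γ a).1 = (γ b).1 ∨ (γ a).2 = (γ b).2) : AxisParallelOn γ (Icc a b) := by
  rcases hends with hends | hends
  · exact Or.inr (HorizontalOn.of_pieces hm (Prod.swap_injective.comp_injOn hinj)
      h₁.swap h₂.swap hends)
  · exact Or.inl (HorizontalOn.of_pieces hm hinj h₁ h₂ hends)

end Direction

/-- On `[a, b]`, `γ` is a simple rectilinear arc all of whose bends have parameters in `B`: every
subarc without a parameter of `B` in its interior is straight. Only the traces of the straight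
pieces matter, so they need not be affinely parametrized, and `B` may contain further points. -/
structure IsRectArc (γ : ℝ → Pt) (a b : ℝ) (B : Finset ℝ) : Prop where
  continuousOn : ContinuousOn γ (Icc a b)
  injOn : InjOn γ (Icc a b)
  axisParallelOn : ∀ ⦃u v⦄, a ≤ u → v ≤ b → (∀ x ∈ B, x ∉ Ioo u v) → AxisParallelOn γ (Icc u v)

lemma IsRectCurveN.exists_isRectArc {n : ℕ} {γ : ℝ → Pt} (h : IsRectCurveN (n + 1) γ) :
    ∃ B : Finset ℝ, B.card ≤ n ∧ IsRectArc γ 0 1 B := by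
  obtain ⟨hinj, c, hc0, hc1, -, hc⟩ := h
  refine ⟨Finset.univ.image fun i : Fin n => c i.succ.castSucc,
    Finset.card_image_le.trans_eq (Finset.card_fin n), ?_, hinj, fun _ _ hu hv hB => ?_⟩
  · have hcover : Icc 0 1 ⊆ ⋃ i : Fin (n + 1), Icc (c i.castSucc) (c i.succ) := fun x hx =>
      mem_iUnion.2 (exists_le_castSucc_and_succ_le (hc0.trans_le hx.1) (hx.2.trans_eq hc1.symm)
        (by simp))
    exact ((locallyFinite_of_finite _).continuousOn_iUnion (fun _ => isClosed_Icc)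
      fun i => (hc i).continuousOn).mono hcover
  · obtain ⟨i, hui, hvi⟩ := exists_le_castSucc_and_succ_le (hc0.trans_le hu)
      (hv.trans_eq hc1.symm) fun i => hB _ (Finset.mem_image_of_mem _ (Finset.mem_univ i))
    exact (hc i).axisParallelOn.mono (Icc_subset_Icc hui hvi)

namespace IsRectArc

variable {γ δ : ℝ → Pt} {a b a' b' : ℝ} {B C : Finset ℝ}

lemma restrict (h : IsRectArc γ a b B) (ha : a ≤ a') (hb : b' ≤ b) :
    IsRectArc γ a' b' (B.filter (· ∈ Ioo a' b')) where
  continuousOn := h.continuousOn.mono (Icc_subset_Icc ha hb)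
  injOn := h.injOn.mono (Icc_subset_Icc ha hb)
  axisParallelOn _ _ hu hv hB := h.axisParallelOn (ha.trans hu) (hv.trans hb) fun x hx hxuv =>
    hB x (Finset.mem_filter.2 ⟨hx, Ioo_subset_Ioo hu hv hxuv⟩) hxuv

lemma endpoints_aligned (h : IsRectArc γ a b ∅) (hab : a ≤ b) :
    (γ a).1 = (γ b).1 ∨ (γ a).2 = (γ b).2 :=
  (h.axisParallelOn le_rfl le_rfl (by simp)).symm.imp
    (fun h => h (left_mem_Icc.2 hab) (right_mem_Icc.2 hab))
    fun h => h (left_mem_Icc.2 hab) (right_mem_Icc.2 hab)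

lemma axisParallelOn_of_card_le_one (h : IsRectArc γ a b B) (hab : a ≤ b) (hB : B.card ≤ 1)
    (hends : (γ a).1 = (γ b).1 ∨ (γ a).2 = (γ b).2) : AxisParallelOn γ (Icc a b) := by
  obtain ⟨m, hBm⟩ := Finset.card_le_one_iff_subset_singleton.1 hB
  -- `m` may lie outside `[a, b]`, in which case one of the two pieces is a point.
  have hm : max a (min m b) ∈ Icc a b := ⟨le_max_left _ _, max_le hab (min_le_right _ _)⟩
  refine .of_pieces hm h.injOn (h.axisParallelOn le_rfl hm.2 fun x hx hxm => ?_)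
    (h.axisParallelOn hm.1 le_rfl fun x hx hxm => ?_) hends <;>
    obtain rfl := Finset.mem_singleton.1 (hBm hx)
  · exact hxm.2.not_ge (max_le hxm.1.le (min_le_left _ _))
  · exact hxm.1.not_ge (le_max_of_le_right (le_min le_rfl hxm.2.le))

lemma two_le_card_add_card (hγ : IsRectArc γ a b B) (hδ : IsRectArc δ a' b' C) (hab : a ≤ b)
    (hab' : a' ≤ b') (ha : γ a = δ a') (hb : γ b = δ b') (hne : γ '' Icc a b ≠ δ '' Icc a' b') :
    2 ≤ B.card + C.card := by
  by_contra! hlt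
  have hends : (γ a).1 = (γ b).1 ∨ (γ a).2 = (γ b).2 := by
    obtain hB | hC : B.card = 0 ∨ C.card = 0 := by omega
    · obtain rfl := Finset.card_eq_zero.1 hB
      exact hγ.endpoints_aligned hab
    · obtain rfl := Finset.card_eq_zero.1 hC
      rw [ha, hb]
      exact hδ.endpoints_aligned hab'
  have hγ_straight : AxisParallelOn γ (Icc a b) :=
    hγ.axisParallelOn_of_card_le_one hab (by omega) hends
  have hδ_straight : AxisParallelOn δ (Icc a' b') :=
    hδ.axisParallelOn_of_card_le_one hab' (by omega) (by rwa [ha, hb] at hends)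
  apply hne
  calc γ '' Icc a b = segment ℝ (γ a) (γ b) :=
        hγ_straight.image_Icc_eq_segment hab hγ.continuousOn hγ.injOn
    _ = segment ℝ (δ a') (δ b') := by rw [ha, hb]
    _ = δ '' Icc a' b' :=
        (hδ_straight.image_Icc_eq_segment hab' hδ.continuousOn hδ.injOn).symm

lemma two_mul_le_card_add_card (hγ : IsRectArc γ a b B) (hδ : IsRectArc δ a' b' C) {k : ℕ}
    {s t : Fin (k + 1) → ℝ} (hs : Monotone s) (ht : Monotone t) (hsab : ∀ i, s i ∈ Icc a b)
    (htab : ∀ i, t i ∈ Icc a' b') (hst : ∀ i, γ (s i) = δ (t i))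
    (hne : ∀ i : Fin k,
      γ '' Icc (s i.castSucc) (s i.succ) ≠ δ '' Icc (t i.castSucc) (t i.succ)) :
    2 * k ≤ B.card + C.card := by
  have hgap (i : Fin k) :
      2 ≤ (B.filter (· ∈ Ioo (s i.castSucc) (s i.succ))).card +
        (C.filter (· ∈ Ioo (t i.castSucc) (t i.succ))).card :=
    (hγ.restrict (hsab _).1 (hsab _).2).two_le_card_add_card (hδ.restrict (htab _).1 (htab _).2)
      (hs i.castSucc_le_succ) (ht i.castSucc_le_succ) (hst _) (hst _) (hne i)
  calc 2 * k = ∑ _i : Fin k, 2 := by simp [mul_comm]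
    _ ≤ ∑ i : Fin k, ((B.filter (· ∈ Ioo (s i.castSucc) (s i.succ))).card +
          (C.filter (· ∈ Ioo (t i.castSucc) (t i.succ))).card) :=
        Finset.sum_le_sum fun i _ => hgap i
    _ ≤ B.card + C.card := by
        rw [Finset.sum_add_distrib]
        exact add_le_add (sum_card_filter_mem_Ioo_le hs B) (sum_card_filter_mem_Ioo_le ht C)

end IsRectArc

/-- Let `γ, δ` be simple rectilinear curves having `k+1` common points
`p 0, …, p k` appearing in the same order along both curves, such that for each `i` the
subcurve of `γ` between consecutive common points differs from the corresponding subcurve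
of `δ`.  Then the total number of bends of `γ` and `δ` is at least `2k` (a curve made of
at most `b+1` axis-parallel segments has at most `b` bends); in particular `γ` and `δ`
cannot both have at most `k-1` bends. -/
theorem sausage_bend_lower_bound (k : ℕ) (hk : 1 ≤ k) (γ δ : ℝ → Pt)
    (hγ : IsRectCurve γ) (hδ : IsRectCurve δ)
    (p : Fin (k + 1) → Pt) (s t : Fin (k + 1) → ℝ)
    (hs : StrictMono s) (ht : StrictMono t)
    (hs01 : ∀ i, s i ∈ Icc (0:ℝ) 1) (ht01 : ∀ i, t i ∈ Icc (0:ℝ) 1)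
    (hγs : ∀ i, γ (s i) = p i) (hδt : ∀ i, δ (t i) = p i)
    (hdiff : ∀ i : Fin k,
      γ '' Icc (s i.castSucc) (s i.succ) ≠ δ '' Icc (t i.castSucc) (t i.succ)) :
    (∀ bγ bδ : ℕ, IsRectCurveN (bγ + 1) γ → IsRectCurveN (bδ + 1) δ → 2 * k ≤ bγ + bδ) ∧
    ¬(IsKBendCurve (k - 1) γ ∧ IsKBendCurve (k - 1) δ) := by
  have hbends : ∀ bγ bδ : ℕ, IsRectCurveN (bγ + 1) γ → IsRectCurveN (bδ + 1) δ →
      2 * k ≤ bγ + bδ := by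
    intro bγ bδ hγN hδN
    obtain ⟨B, hB, hγB⟩ := hγN.exists_isRectArc
    obtain ⟨C, hC, hδC⟩ := hδN.exists_isRectArc
    calc 2 * k ≤ B.card + C.card :=
          hγB.two_mul_le_card_add_card hδC hs.monotone ht.monotone hs01 ht01
            (fun i => (hγs i).trans (hδt i).symm) hdiff
      _ ≤ bγ + bδ := add_le_add hB hC
  refine ⟨hbends, fun ⟨hγk, hδk⟩ => ?_⟩
  have := hbends _ _ hγk hδk
  omega
end
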